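/- arXiv:math/0403438 — 5 statements merged into one kernel-verified Lean document; each statement's English description precedes it below -/
import Mathlib

section
/- Let ℓ : (0,∞) → (0,∞) be slowly varying at ∞ (i.e., for every c > 0, ℓ(ct)/ℓ(t) → 1 as t → ∞), let 0 < α ≤ 1, and set ν̄(y) = y^{-α} ℓ(1/y) for y > 0. Let S : [0,∞) → [0,∞) be a nondecreasing right-continuous function with left limits, and for 0 ≤ s < t and y > 0 let N_y(s,t) be the number of points u ∈ (s,t] with S(u) − S(u−) ≥ y. Assume that for all 0 ≤ s < t one has N_y(s,t)/ν̄(y) → t − s as y ↓ 0. Let φ : [0,∞) → [0,1) be a continuously differentiable, strictly increasing surjection with φ(0) = 0 and φ'(y) > 0 for all y. For x > 0 and t > 0 let Ñ_x(t) be the number of points u ∈ (0,t] with φ(S(u)) − φ(S(u−)) ≥ x. Then for every t > 0, Ñ_x(t)/ν̄(x) → ∫₀^t (φ'(S(u)))^α du as x ↓ 0. -/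
open Filter MeasureTheory Real Set

/-!
By the mean value theorem a jump of `φ ∘ S` at `u ∈ (s, t]` is `φ'(c)` times the jump of `S` at `u`,
for some `c ∈ [S s, S t]`. Regular variation of `ν` turns the factor `φ'(c)` in the size of a jump
into a factor `φ'(c)^α` in the limiting count (or `0` when `φ'(c) ≤ 0`), so on `(s, t]` the
limiting count differs from `∫ (φ' ∘ S)^α` by at most `t - s` times the oscillation of `(φ')^α`
over `[S s, S t]`. By uniform continuity this oscillation is at most `ε + C (S t - S s)`: although
`S` itself may jump, the second term telescopes over the cells of a uniform partition, and refining
the partition makes the total error arbitrarily small.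
-/

open scoped Topology

theorem exists_dist_le_add_mul_dist {X Y : Type*} [PseudoMetricSpace X] [PseudoMetricSpace Y]
    {f : X → Y} {K : Set X} (hK : IsCompact K) (hf : ContinuousOn f K) {ε : ℝ} (hε : 0 < ε) :
    ∃ C, 0 ≤ C ∧ ∀ x ∈ K, ∀ y ∈ K, dist (f x) (f y) ≤ ε + C * dist x y := by
  obtain ⟨δ, hδ, hclose⟩ :=
    Metric.uniformContinuousOn_iff.1 (hK.uniformContinuousOn_of_continuous hf) ε hε
  obtain ⟨D, hD⟩ := Metric.isBounded_iff.1 (hK.image_of_continuousOn hf).isBounded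
  refine ⟨|D| / δ, by positivity, fun x hx y hy => ?_⟩
  rcases lt_or_ge (dist x y) δ with hxy | hxy
  · have : 0 ≤ |D| / δ * dist x y := by positivity
    linarith [hclose x hx y hy hxy]
  · calc dist (f x) (f y) ≤ |D| :=
          (hD (mem_image_of_mem f hx) (mem_image_of_mem f hy)).trans (le_abs_self D)
      _ = |D| / δ * δ := (div_mul_cancel₀ _ hδ.ne').symm
      _ ≤ |D| / δ * dist x y := by gcongr
      _ ≤ ε + |D| / δ * dist x y := le_add_of_nonneg_left hε.le

section UniformPartition

/-- The `k`-th node of the partition of `[a, b]` into `n` cells of equal length; only `n ≠ 0` is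
meaningful, since division by zero makes every node `a` otherwise. -/
noncomputable def uniformNode (a b : ℝ) (n k : ℕ) : ℝ :=
  a + k * ((b - a) / n)

variable {a b : ℝ} {n : ℕ}

theorem uniformNode_zero : uniformNode a b n 0 = a := by
  simp [uniformNode]

theorem uniformNode_self (hn : n ≠ 0) : uniformNode a b n n = b := by
  rw [uniformNode, mul_div_cancel₀ _ (Nat.cast_ne_zero.2 hn), add_sub_cancel]

theorem uniformNode_succ_sub (k : ℕ) :
    uniformNode a b n (k + 1) - uniformNode a b n k = (b - a) / n := by
  simp only [uniformNode, Nat.cast_succ]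
  ring

theorem strictMono_uniformNode (hab : a < b) (hn : n ≠ 0) : StrictMono (uniformNode a b n) :=
  strictMono_nat_of_lt_succ fun k => sub_pos.1 <| by
    rw [uniformNode_succ_sub]
    exact div_pos (sub_pos.2 hab) (Nat.cast_pos.2 hn.bot_lt)

variable {E : Type*} [SeminormedAddCommGroup E]

theorem norm_sub_le_of_uniformNode {f : ℝ → E} {w : ℝ → ℝ} {ε : ℝ} (hn : n ≠ 0)
    (h : ∀ k ∈ Finset.range n, ‖f (uniformNode a b n (k + 1)) - f (uniformNode a b n k)‖ ≤
      (b - a) / n * (ε + (w (uniformNode a b n (k + 1)) - w (uniformNode a b n k)))) :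
    ‖f b - f a‖ ≤ (b - a) * (ε + (w b - w a) / n) := by
  have hn' : (n : ℝ) ≠ 0 := Nat.cast_ne_zero.2 hn
  calc ‖f b - f a‖
      = ‖∑ k ∈ Finset.range n, (f (uniformNode a b n (k + 1)) - f (uniformNode a b n k))‖ := by
        rw [Finset.sum_range_sub (fun k => f (uniformNode a b n k)), uniformNode_zero,
          uniformNode_self hn]
    _ ≤ ∑ k ∈ Finset.range n, (b - a) / n *
          (ε + (w (uniformNode a b n (k + 1)) - w (uniformNode a b n k))) := norm_sum_le_of_le _ h
    _ = (b - a) * (ε + (w b - w a) / n) := by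
        rw [← Finset.mul_sum, Finset.sum_add_distrib,
          Finset.sum_range_sub (fun k => w (uniformNode a b n k)), uniformNode_zero,
          uniformNode_self hn, Finset.sum_const, Finset.card_range, nsmul_eq_mul]
        field_simp

theorem tendsto_sub_zero_of_eventually_norm_sub_le {ι : Type*} {l : Filter ι} {A : ι → ℝ → E}
    (hab : a ≤ b)
    (h : ∀ ε > 0, ∃ w : ℝ → ℝ, ∀ s t, a ≤ s → s < t → t ≤ b →
      ∀ᶠ i in l, ‖A i t - A i s‖ ≤ (t - s) * (ε + (w t - w s))) :
    Tendsto (fun i => A i b - A i a) l (𝓝 0) := by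
  rcases hab.eq_or_lt with rfl | hab
  · simp only [sub_self, tendsto_const_nhds]
  have hlen : 0 < b - a := sub_pos.2 hab
  rw [NormedAddGroup.tendsto_nhds_zero]
  intro ε hε
  obtain ⟨w, hw⟩ := h (ε / (b - a) / 2) (by positivity)
  have hmesh : Tendsto (fun n : ℕ => (w b - w a) / n) atTop (𝓝 0) :=
    tendsto_const_div_atTop_nhds_zero_nat _
  have hhalf : 0 < ε / (b - a) / 2 := by positivity
  obtain ⟨n, hn_small, hn⟩ :=
    ((hmesh.eventually_lt_const hhalf).and (eventually_ne_atTop 0)).exists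
  have hmono := strictMono_uniformNode hab hn
  have hcells : ∀ᶠ i in l, ∀ k ∈ Finset.range n,
      ‖A i (uniformNode a b n (k + 1)) - A i (uniformNode a b n k)‖ ≤ (b - a) / n *
        (ε / (b - a) / 2 + (w (uniformNode a b n (k + 1)) - w (uniformNode a b n k))) := by
    refine (Finset.eventually_all _).2 fun k hk => ?_
    rw [← uniformNode_succ_sub k]
    refine hw _ _ ?_ (hmono k.lt_succ_self) ?_
    · exact uniformNode_zero.symm.trans_le (hmono.monotone k.zero_le)
    · exact (hmono.monotone (Finset.mem_range.1 hk)).trans_eq (uniformNode_self hn)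
  filter_upwards [hcells] with i hi
  calc ‖A i b - A i a‖
      ≤ (b - a) * (ε / (b - a) / 2 + (w b - w a) / n) := norm_sub_le_of_uniformNode hn hi
    _ < (b - a) * (ε / (b - a) / 2 + ε / (b - a) / 2) := by gcongr
    _ = ε := by rw [add_halves, mul_div_cancel₀ _ hlen.ne']

end UniformPartition

theorem leftLim_mem_Icc_of_monotoneOn {X Y : Type*} [LinearOrder X] [TopologicalSpace X]
    [OrderTopology X] [DenselyOrdered X] [ConditionallyCompleteLinearOrder Y] [TopologicalSpace Y]
    [OrderTopology Y] {f : X → Y} {a u : X} (hau : a < u) (hf : MonotoneOn f (Icc a u)) :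
    Function.leftLim f u ∈ Icc (f a) (f u) := by
  have hupper : f u ∈ upperBounds (f '' Ioo a u) := by
    rintro _ ⟨v, hv, rfl⟩
    exact hf (Ioo_subset_Icc_self hv) (right_mem_Icc.2 hau.le) hv.2.le
  have hlim := (hf.mono Ioo_subset_Icc_self).tendsto_nhdsWithin_Ioo_left (nonempty_Ioo.2 hau)
    ⟨f u, hupper⟩
  have : (𝓝[<] u).NeBot := nhdsLT_neBot_of_exists_lt ⟨a, hau⟩
  obtain ⟨v, hv⟩ := nonempty_Ioo.2 hau
  rw [leftLim_eq_of_tendsto hlim]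
  exact ⟨(hf (left_mem_Icc.2 hau.le) (Ioo_subset_Icc_self hv) hv.1.le).trans
      (le_csSup ⟨f u, hupper⟩ (mem_image_of_mem f hv)),
    csSup_le ((nonempty_Ioo.2 hau).image f) hupper⟩

theorem exists_sub_eq_mul_of_hasDerivWithinAt {f f' : ℝ → ℝ} {p q : ℝ} (hpq : p ≤ q)
    (hf : ∀ y ∈ Icc p q, HasDerivWithinAt f (f' y) (Icc p q) y) :
    ∃ c ∈ Icc p q, f q - f p = f' c * (q - p) := by
  rcases hpq.eq_or_lt with rfl | hlt
  · exact ⟨p, left_mem_Icc.2 le_rfl, by simp only [sub_self, mul_zero]⟩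
  · obtain ⟨c, hc, hslope⟩ := exists_hasDerivAt_eq_slope f f' hlt
      (fun y hy => (hf y hy).continuousWithinAt)
      (fun y hy => (hf y (Ioo_subset_Icc_self hy)).hasDerivAt (Icc_mem_nhds hy.1 hy.2))
    exact ⟨c, Ioo_subset_Icc_self hc, by rw [hslope, div_mul_cancel₀ _ (sub_pos.2 hlt).ne']⟩

theorem Icc_subset_Icc_of_monotoneOn {X Y : Type*} [Preorder X] [Preorder Y] {f : X → Y}
    {a b s t : X} (hf : MonotoneOn f (Icc a b)) (has : a ≤ s) (hst : s ≤ t) (htb : t ≤ b) :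
    Icc (f s) (f t) ⊆ Icc (f a) (f b) :=
  Icc_subset_Icc
    (hf (left_mem_Icc.2 (has.trans (hst.trans htb))) ⟨has, hst.trans htb⟩ has)
    (hf ⟨has.trans hst, htb⟩ (right_mem_Icc.2 (has.trans (hst.trans htb))) htb)

theorem intervalIntegrable_comp_of_monotoneOn {S g : ℝ → ℝ} {a b : ℝ} (hab : a ≤ b)
    (hS : MonotoneOn S (Icc a b)) (hg : ContinuousOn g (Icc (S a) (S b))) :
    IntervalIntegrable (fun u => g (S u)) volume a b := by
  have hSab : S a ≤ S b := hS (left_mem_Icc.2 hab) (right_mem_Icc.2 hab) hab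
  have hmaps : MapsTo S (Icc a b) (Icc (S a) (S b)) := fun u hu =>
    ⟨hS (left_mem_Icc.2 hab) hu hu.1, hS hu (right_mem_Icc.2 hab) hu.2⟩
  have hmeas : AEMeasurable (fun u => g (S u)) (volume.restrict (Icc a b)) := by
    have hext : Continuous (IccExtend hSab ((Icc (S a) (S b)).domRestrict g)) :=
      (continuousOn_iff_continuous_domRestrict.1 hg).Icc_extend'
    refine (hext.measurable.comp_aemeasurable
      (aemeasurable_restrict_of_monotoneOn measurableSet_Icc hS)).congr ?_
    filter_upwards [ae_restrict_mem measurableSet_Icc] with u hu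
    exact IccExtend_of_mem hSab _ (hmaps hu)
  obtain ⟨C, hC⟩ := isCompact_Icc.exists_bound_of_continuousOn hg
  rw [intervalIntegrable_iff_integrableOn_Icc_of_le hab]
  refine .of_bound measure_Icc_lt_top hmeas.aestronglyMeasurable C ?_
  filter_upwards [ae_restrict_mem measurableSet_Icc] with u hu
  exact hC _ (hmaps hu)

theorem abs_integral_sub_mul_le {f : ℝ → ℝ} {s t c η : ℝ} (hst : s ≤ t)
    (hf : IntervalIntegrable f volume s t) (hη : ∀ u ∈ Ioc s t, |f u - c| ≤ η) :
    |(∫ u in s..t, f u) - c * (t - s)| ≤ η * (t - s) := by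
  have hbound := intervalIntegral.norm_integral_le_of_norm_le_const
    (f := fun u => f u - c) (by rwa [uIoc_of_le hst])
  rwa [intervalIntegral.integral_sub hf intervalIntegrable_const, intervalIntegral.integral_const,
    smul_eq_mul, mul_comm (t - s), abs_of_nonneg (sub_nonneg.2 hst)] at hbound

/-- Regular variation at `0` from the right with index `ρ`. Positivity is required only near `0`,
and, unlike in Karamata's theory, no measurability is imposed. -/
def RegularlyVaryingAtZero (ν : ℝ → ℝ) (ρ : ℝ) : Prop :=
  (∀ᶠ x in 𝓝[>] 0, 0 < ν x) ∧ ∀ c > 0, Tendsto (fun x => ν (c * x) / ν x) (𝓝[>] 0) (𝓝 (c ^ ρ))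

theorem regularlyVaryingAtZero_rpow_mul {ℓ : ℝ → ℝ} (hpos : ∀ t, 0 < t → 0 < ℓ t)
    (hℓ : ∀ c, 0 < c → Tendsto (fun t => ℓ (c * t) / ℓ t) atTop (𝓝 1)) (ρ : ℝ) :
    RegularlyVaryingAtZero (fun x => x ^ ρ * ℓ (1 / x)) ρ := by
  refine ⟨?_, fun c hc => ?_⟩
  · filter_upwards [self_mem_nhdsWithin] with x (hx : 0 < x)
    exact mul_pos (rpow_pos_of_pos hx ρ) (hpos _ (one_div_pos.2 hx))
  · have hlim := ((hℓ c⁻¹ (inv_pos.2 hc)).comp tendsto_inv_nhdsGT_zero).const_mul (c ^ ρ)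
    rw [mul_one] at hlim
    refine hlim.congr' ?_
    filter_upwards [self_mem_nhdsWithin] with x (hx : 0 < x)
    simp only [Function.comp_apply, one_div, mul_inv, mul_rpow hc.le hx.le]
    field_simp [(rpow_pos_of_pos hx ρ).ne']

theorem RegularlyVaryingAtZero.tendsto_comp_mul_div {ν N : ℝ → ℝ} {ρ d c : ℝ}
    (hν : RegularlyVaryingAtZero ν ρ) (hN : Tendsto (fun y => N y / ν y) (𝓝[>] 0) (𝓝 d))
    (hc : 0 < c) : Tendsto (fun x => N (c * x) / ν x) (𝓝[>] 0) (𝓝 (c ^ ρ * d)) := by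
  have hscale : Tendsto (fun x => c * x) (𝓝[>] 0) (𝓝[>] 0) := by
    refine tendsto_nhdsWithin_of_tendsto_nhds_of_eventually_within _ ?_ ?_
    · exact ((continuous_const_mul c).tendsto' 0 0 (mul_zero c)).mono_left nhdsWithin_le_nhds
    · filter_upwards [self_mem_nhdsWithin] with x hx using mul_pos hc hx
  refine ((hν.2 c hc).mul (hN.comp hscale)).congr' ?_
  filter_upwards [hscale.eventually hν.1] with x hx
  rw [Function.comp_apply, div_mul_div_comm, mul_comm (ν x), mul_div_mul_left _ _ hx.ne']

section Exceedances

/-- The points of `A` at which `J` is at least `x`. For `J u = S u - S (u-)` and `A = (s, t]`,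
its cardinality is the jump count `N_x(s, t)`. -/
def exceedances {X : Type*} (J : X → ℝ) (A : Set X) (x : ℝ) : Set X :=
  {u | u ∈ A ∧ x ≤ J u}

variable {X : Type*} {J K : X → ℝ} {A : Set X} {M x : ℝ}

theorem exceedances_eq_empty_of_nonpos (hJ : ∀ u ∈ A, J u ≤ 0) (hx : 0 < x) :
    exceedances J A x = ∅ :=
  eq_empty_of_forall_notMem fun u hu => (hx.trans_le hu.2).not_ge (hJ u hu.1)

theorem exceedances_subset_of_le_mul (hM : 0 < M) (hKJ : ∀ u ∈ A, K u ≤ M * J u) :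
    exceedances K A x ⊆ exceedances J A (M⁻¹ * x) := fun u hu =>
  ⟨hu.1, (inv_mul_le_iff₀ hM).2 (hu.2.trans (hKJ u hu.1))⟩

theorem exceedances_subset_of_mul_le (hM : 0 < M) (hJK : ∀ u ∈ A, M * J u ≤ K u) :
    exceedances J A (M⁻¹ * x) ⊆ exceedances K A x := fun u hu =>
  ⟨hu.1, ((inv_mul_le_iff₀ hM).1 hu.2).trans (hJK u hu.1)⟩

theorem finite_exceedances_of_tendsto {ν : ℝ → ℝ} {d : ℝ} (hd : d ≠ 0)
    (hJ : Tendsto (fun y => ((exceedances J A y).ncard : ℝ) / ν y) (𝓝[>] 0) (𝓝 d)) (hx : 0 < x) :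
    (exceedances J A x).Finite := by
  obtain ⟨y, hy, hyx⟩ :=
    ((hJ.eventually_ne hd).and (mem_nhdsWithin_of_mem_nhds (Iio_mem_nhds hx))).exists
  have hcard : (exceedances J A y).ncard ≠ 0 := fun h => hy (by rw [h, Nat.cast_zero, zero_div])
  exact (finite_of_ncard_ne_zero hcard).subset fun u hu => ⟨hu.1, (le_of_lt hyx).trans hu.2⟩

theorem finite_exceedances_of_le_mul (hfin : ∀ y > 0, (exceedances J A y).Finite)
    (hJ : ∀ u ∈ A, 0 ≤ J u) (hKJ : ∀ u ∈ A, K u ≤ M * J u) (hx : 0 < x) :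
    (exceedances K A x).Finite := by
  rcases le_or_gt M 0 with hM | hM
  · rw [exceedances_eq_empty_of_nonpos
      (fun u hu => (hKJ u hu).trans (mul_nonpos_of_nonpos_of_nonneg hM (hJ u hu))) hx]
    exact finite_empty
  · exact (hfin _ (by positivity)).subset (exceedances_subset_of_le_mul hM hKJ)

theorem ncard_exceedances_Ioc_sub {J : ℝ → ℝ} {a s t : ℝ} (has : a ≤ s) (hst : s ≤ t)
    (hfin : (exceedances J (Ioc a t) x).Finite) :
    ((exceedances J (Ioc a t) x).ncard : ℝ) - (exceedances J (Ioc a s) x).ncard =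
      (exceedances J (Ioc s t) x).ncard := by
  have hunion : exceedances J (Ioc a t) x =
      exceedances J (Ioc a s) x ∪ exceedances J (Ioc s t) x := by
    simp only [exceedances, ← Ioc_union_Ioc_eq_Ioc has hst, mem_union, or_and_right]
    rfl
  have hdisj : Disjoint (exceedances J (Ioc a s) x) (exceedances J (Ioc s t) x) :=
    disjoint_left.2 fun u hu hu' => hu.1.2.not_gt hu'.1.1
  rw [hunion] at hfin ⊢
  rw [ncard_union_eq hdisj (hfin.subset subset_union_left) (hfin.subset subset_union_right),
    Nat.cast_add, add_sub_cancel_left]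

end Exceedances

section CountAsymptotics

variable {X : Type*} {J K : X → ℝ} {A : Set X} {ν : ℝ → ℝ} {α d : ℝ}

theorem tendsto_ncard_exceedances_inv_mul_div (hν : RegularlyVaryingAtZero ν (-α))
    (hJ : Tendsto (fun y => ((exceedances J A y).ncard : ℝ) / ν y) (𝓝[>] 0) (𝓝 d))
    {M : ℝ} (hM : 0 < M) :
    Tendsto (fun x => ((exceedances J A (M⁻¹ * x)).ncard : ℝ) / ν x) (𝓝[>] 0)
      (𝓝 (M ^ α * d)) := by
  have hexp : M⁻¹ ^ (-α) = M ^ α := by rw [rpow_neg_eq_inv_rpow, inv_inv]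
  exact hexp ▸ hν.tendsto_comp_mul_div hJ (inv_pos.2 hM)

theorem eventually_ncard_exceedances_div_lt (hα : α ≠ 0) (hν : RegularlyVaryingAtZero ν (-α))
    (hJ : Tendsto (fun y => ((exceedances J A y).ncard : ℝ) / ν y) (𝓝[>] 0) (𝓝 d))
    (hfin : ∀ y > 0, (exceedances J A y).Finite) (hJ_nonneg : ∀ u ∈ A, 0 ≤ J u)
    {M : ℝ} (hKJ : ∀ u ∈ A, K u ≤ M * J u) {r : ℝ} (hr : M⁺ ^ α * d < r) :
    ∀ᶠ x in 𝓝[>] 0, ((exceedances K A x).ncard : ℝ) / ν x < r := by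
  rcases le_or_gt M 0 with hM | hM
  · rw [posPart_eq_zero.2 hM, zero_rpow hα, zero_mul] at hr
    filter_upwards [self_mem_nhdsWithin] with x hx
    rwa [exceedances_eq_empty_of_nonpos
      (fun u hu => (hKJ u hu).trans (mul_nonpos_of_nonpos_of_nonneg hM (hJ_nonneg u hu))) hx,
      ncard_empty, Nat.cast_zero, zero_div]
  · rw [posPart_eq_self.2 hM.le] at hr
    filter_upwards [(tendsto_ncard_exceedances_inv_mul_div hν hJ hM).eventually_lt_const hr, hν.1,
      self_mem_nhdsWithin] with x hlt hνx (hx : 0 < x)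
    refine lt_of_le_of_lt ?_ hlt
    gcongr
    exacts [hfin _ (by positivity), exceedances_subset_of_le_mul hM hKJ]

theorem eventually_lt_ncard_exceedances_div (hα : α ≠ 0) (hν : RegularlyVaryingAtZero ν (-α))
    (hJ : Tendsto (fun y => ((exceedances J A y).ncard : ℝ) / ν y) (𝓝[>] 0) (𝓝 d))
    (hfin : ∀ x > 0, (exceedances K A x).Finite)
    {m : ℝ} (hJK : ∀ u ∈ A, m * J u ≤ K u) {r : ℝ} (hr : r < m⁺ ^ α * d) :
    ∀ᶠ x in 𝓝[>] 0, r < ((exceedances K A x).ncard : ℝ) / ν x := by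
  rcases le_or_gt m 0 with hm | hm
  · rw [posPart_eq_zero.2 hm, zero_rpow hα, zero_mul] at hr
    filter_upwards [hν.1] with x hνx
    exact hr.trans_le (by positivity)
  · rw [posPart_eq_self.2 hm.le] at hr
    filter_upwards [(tendsto_ncard_exceedances_inv_mul_div hν hJ hm).eventually_const_lt hr, hν.1,
      self_mem_nhdsWithin] with x hlt hνx hx
    refine hlt.trans_le ?_
    gcongr
    exacts [hfin _ hx, exceedances_subset_of_mul_le hm hJK]

end CountAsymptotics

section ImageJump

/-- The jump `S u - S (u-)` of `S` at `u`. -/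
noncomputable def jump (S : ℝ → ℝ) (u : ℝ) : ℝ :=
  S u - Function.leftLim S u

/-- The increment of `φ` across the jump of `S` at `u`, i.e. the jump of `φ ∘ S` at `u` when `φ` is
continuous. It is expressed through `S (u-)` so that left limits of `φ ∘ S` need not be computed. -/
noncomputable def imageJump (φ S : ℝ → ℝ) (u : ℝ) : ℝ :=
  φ (S u) - φ (Function.leftLim S u)

/-- The normalized number of image jumps of size at least `x` on `(s, t]`, minus its expected limit
as `x ↓ 0`. The positive part accounts for the fact that a jump of `S` on which `φ` decreases
produces no image jump of positive size. -/
noncomputable def imageJumpError (ν : ℝ → ℝ) (α : ℝ) (φ φ' S : ℝ → ℝ) (x s t : ℝ) : ℝ :=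
  ((exceedances (imageJump φ S) (Ioc s t) x).ncard : ℝ) / ν x - ∫ u in s..t, (φ' (S u))⁺ ^ α

variable {ν S φ φ' : ℝ → ℝ} {α a b s t : ℝ}

theorem jump_nonneg_of_monotoneOn (hS : MonotoneOn S (Icc s t)) :
    ∀ u ∈ Ioc s t, 0 ≤ jump S u := fun _ hu =>
  sub_nonneg.2 (leftLim_mem_Icc_of_monotoneOn hu.1 (hS.mono (Icc_subset_Icc_right hu.2))).2

theorem exists_imageJump_eq_mul_jump (hS : MonotoneOn S (Icc s t))
    (hφ : ∀ y ∈ Icc (S s) (S t), HasDerivWithinAt φ (φ' y) (Icc (S s) (S t)) y) :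
    ∀ u ∈ Ioc s t, ∃ c ∈ Icc (S s) (S t), imageJump φ S u = φ' c * jump S u := by
  intro u hu
  obtain ⟨hlower, hupper⟩ :=
    leftLim_mem_Icc_of_monotoneOn hu.1 (hS.mono (Icc_subset_Icc_right hu.2))
  have hut : S u ≤ S t := hS (Ioc_subset_Icc_self hu) (right_mem_Icc.2 (hu.1.le.trans hu.2)) hu.2
  have hsub : Icc (Function.leftLim S u) (S u) ⊆ Icc (S s) (S t) := Icc_subset_Icc hlower hut
  obtain ⟨c, hc, heq⟩ := exists_sub_eq_mul_of_hasDerivWithinAt hupper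
    fun y hy => (hφ y (hsub hy)).mono hsub
  exact ⟨c, hsub hc, heq⟩

theorem imageJump_le_mul_jump (hS : MonotoneOn S (Icc s t))
    (hφ : ∀ y ∈ Icc (S s) (S t), HasDerivWithinAt φ (φ' y) (Icc (S s) (S t)) y)
    {M : ℝ} (hM : ∀ y ∈ Icc (S s) (S t), φ' y ≤ M) :
    ∀ u ∈ Ioc s t, imageJump φ S u ≤ M * jump S u := by
  intro u hu
  obtain ⟨c, hc, heq⟩ := exists_imageJump_eq_mul_jump hS hφ u hu
  exact heq ▸ mul_le_mul_of_nonneg_right (hM c hc) (jump_nonneg_of_monotoneOn hS u hu)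

theorem mul_jump_le_imageJump (hS : MonotoneOn S (Icc s t))
    (hφ : ∀ y ∈ Icc (S s) (S t), HasDerivWithinAt φ (φ' y) (Icc (S s) (S t)) y)
    {m : ℝ} (hm : ∀ y ∈ Icc (S s) (S t), m ≤ φ' y) :
    ∀ u ∈ Ioc s t, m * jump S u ≤ imageJump φ S u := by
  intro u hu
  obtain ⟨c, hc, heq⟩ := exists_imageJump_eq_mul_jump hS hφ u hu
  exact heq ▸ mul_le_mul_of_nonneg_right (hm c hc) (jump_nonneg_of_monotoneOn hS u hu)

theorem finite_exceedances_imageJump (hS : MonotoneOn S (Icc s t))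
    (hfin : ∀ y > 0, (exceedances (jump S) (Ioc s t) y).Finite)
    (hφ : ∀ y ∈ Icc (S s) (S t), HasDerivWithinAt φ (φ' y) (Icc (S s) (S t)) y)
    (hφ' : ContinuousOn φ' (Icc (S s) (S t))) :
    ∀ x > 0, (exceedances (imageJump φ S) (Ioc s t) x).Finite := by
  intro x hx
  obtain ⟨M, hM⟩ := isCompact_Icc.bddAbove_image hφ'
  exact finite_exceedances_of_le_mul hfin (jump_nonneg_of_monotoneOn hS)
    (imageJump_le_mul_jump hS hφ fun y hy => hM (mem_image_of_mem φ' hy)) hx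

theorem continuousOn_posPart_rpow (hα : 0 ≤ α) {D : Set ℝ} (hφ' : ContinuousOn φ' D) :
    ContinuousOn (fun y => (φ' y)⁺ ^ α) D :=
  (hφ'.sup continuousOn_const).rpow_const fun _ _ => .inr hα

theorem eventually_abs_imageJumpError_le (hα : 0 < α)
    (hν : RegularlyVaryingAtZero ν (-α)) (hst : s < t) (hS : MonotoneOn S (Icc s t))
    (hJ : Tendsto (fun y => ((exceedances (jump S) (Ioc s t) y).ncard : ℝ) / ν y) (𝓝[>] 0)
      (𝓝 (t - s)))
    (hφ : ∀ y ∈ Icc (S s) (S t), HasDerivWithinAt φ (φ' y) (Icc (S s) (S t)) y)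
    (hφ' : ContinuousOn φ' (Icc (S s) (S t))) {η δ : ℝ} (hδ : 0 < δ)
    (hη : ∀ y ∈ Icc (S s) (S t), ∀ z ∈ Icc (S s) (S t), dist ((φ' y)⁺ ^ α) ((φ' z)⁺ ^ α) ≤ η) :
    ∀ᶠ x in 𝓝[>] 0, |imageJumpError ν α φ φ' S x s t| ≤ (t - s) * (η + δ) := by
  have hs : s ∈ Icc s t := left_mem_Icc.2 hst.le
  have ht : t ∈ Icc s t := right_mem_Icc.2 hst.le
  have hne : (Icc (S s) (S t)).Nonempty := nonempty_Icc.2 (hS hs ht hst.le)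
  obtain ⟨ξ, hξ, hmax⟩ := isCompact_Icc.exists_isMaxOn hne hφ'
  obtain ⟨ζ, hζ, hmin⟩ := isCompact_Icc.exists_isMinOn hne hφ'
  have hfin : ∀ y > 0, (exceedances (jump S) (Ioc s t) y).Finite := fun _ =>
    finite_exceedances_of_tendsto (sub_pos.2 hst).ne' hJ
  have hintegral : ∀ c ∈ Icc (S s) (S t),
      |(∫ u in s..t, (φ' (S u))⁺ ^ α) - (φ' c)⁺ ^ α * (t - s)| ≤ η * (t - s) := fun c hc =>
    abs_integral_sub_mul_le hst.le (intervalIntegrable_comp_of_monotoneOn hst.le hS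
      (continuousOn_posPart_rpow hα.le hφ')) fun u hu =>
        hη _ ⟨hS hs (Ioc_subset_Icc_self hu) hu.1.le, hS (Ioc_subset_Icc_self hu) ht hu.2⟩ c hc
  have hmargin : 0 < δ * (t - s) := mul_pos hδ (sub_pos.2 hst)
  filter_upwards [
    eventually_ncard_exceedances_div_lt hα.ne' hν hJ hfin (jump_nonneg_of_monotoneOn hS)
      (imageJump_le_mul_jump hS hφ hmax) (lt_add_of_pos_right _ hmargin),
    eventually_lt_ncard_exceedances_div hα.ne' hν hJ (finite_exceedances_imageJump hS hfin hφ hφ')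
      (mul_jump_le_imageJump hS hφ hmin) (sub_lt_self _ hmargin)] with x hupper hlower
  have hξ_int := abs_le.1 (hintegral ξ hξ)
  have hζ_int := abs_le.1 (hintegral ζ hζ)
  rw [imageJumpError, abs_le]
  constructor <;> linarith

theorem exists_eventually_abs_imageJumpError_le (hα : 0 < α)
    (hν : RegularlyVaryingAtZero ν (-α)) (hS : MonotoneOn S (Icc a b))
    (hJ : ∀ s t, a ≤ s → s < t → t ≤ b →
      Tendsto (fun y => ((exceedances (jump S) (Ioc s t) y).ncard : ℝ) / ν y) (𝓝[>] 0)
        (𝓝 (t - s)))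
    (hφ : ∀ y ∈ Icc (S a) (S b), HasDerivWithinAt φ (φ' y) (Icc (S a) (S b)) y)
    (hφ' : ContinuousOn φ' (Icc (S a) (S b))) {ε : ℝ} (hε : 0 < ε) :
    ∃ w : ℝ → ℝ, ∀ s t, a ≤ s → s < t → t ≤ b →
      ∀ᶠ x in 𝓝[>] 0,
        |imageJumpError ν α φ φ' S x s t| ≤ (t - s) * (ε + (w t - w s)) := by
  obtain ⟨C, hC, hmod⟩ := exists_dist_le_add_mul_dist isCompact_Icc
    (continuousOn_posPart_rpow hα.le hφ') (half_pos hε)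
  refine ⟨fun u => C * S u, fun s t has hst htb => ?_⟩
  have hsub := Icc_subset_Icc_of_monotoneOn hS has hst.le htb
  have hosc : ∀ y ∈ Icc (S s) (S t), ∀ z ∈ Icc (S s) (S t),
      dist ((φ' y)⁺ ^ α) ((φ' z)⁺ ^ α) ≤ ε / 2 + C * (S t - S s) := fun y hy z hz => by
    grw [hmod y (hsub hy) z (hsub hz), Real.dist_le_of_mem_Icc hy hz]
  filter_upwards [eventually_abs_imageJumpError_le hα hν hst
    (hS.mono (Icc_subset_Icc has htb)) (hJ s t has hst htb)
    (fun y hy => (hφ y (hsub hy)).mono hsub) (hφ'.mono hsub) (half_pos hε) hosc] with x hx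
  exact hx.trans_eq (by ring)

theorem imageJumpError_self (x : ℝ) : imageJumpError ν α φ φ' S x a a = 0 := by
  have hempty : exceedances (imageJump φ S) (Ioc a a) x = ∅ :=
    eq_empty_of_forall_notMem fun u hu => hu.1.1.not_ge hu.1.2
  rw [imageJumpError, hempty, ncard_empty, intervalIntegral.integral_same, Nat.cast_zero,
    zero_div, sub_zero]

theorem imageJumpError_sub (hα : 0 ≤ α) (has : a ≤ s) (hst : s ≤ t) (hS : MonotoneOn S (Icc a t))
    (hφ' : ContinuousOn φ' (Icc (S a) (S t))) {x : ℝ}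
    (hfin : (exceedances (imageJump φ S) (Ioc a t) x).Finite) :
    imageJumpError ν α φ φ' S x a t - imageJumpError ν α φ φ' S x a s =
      imageJumpError ν α φ φ' S x s t := by
  have hint : ∀ r, a ≤ r → r ≤ t →
      IntervalIntegrable (fun u => (φ' (S u))⁺ ^ α) volume a r := fun r har hrt =>
    intervalIntegrable_comp_of_monotoneOn har (hS.mono (Icc_subset_Icc_right hrt))
      ((continuousOn_posPart_rpow hα hφ').mono (Icc_subset_Icc_of_monotoneOn hS le_rfl har hrt))
  simp only [imageJumpError]
  rw [sub_sub_sub_comm, ← sub_div, ncard_exceedances_Ioc_sub has hst hfin,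
    intervalIntegral.integral_interval_sub_left (hint t (has.trans hst) le_rfl) (hint s has hst)]

end ImageJump

theorem gap_count_transformed_general {ν S φ φ' : ℝ → ℝ} {α a b : ℝ} (hα : 0 < α)
    (hν : RegularlyVaryingAtZero ν (-α)) (hab : a ≤ b) (hS : MonotoneOn S (Icc a b))
    (hJ : ∀ s t, a ≤ s → s < t → t ≤ b →
      Tendsto (fun y => ((exceedances (jump S) (Ioc s t) y).ncard : ℝ) / ν y) (𝓝[>] 0)
        (𝓝 (t - s)))
    (hφ : ∀ y ∈ Icc (S a) (S b), HasDerivWithinAt φ (φ' y) (Icc (S a) (S b)) y)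
    (hφ' : ContinuousOn φ' (Icc (S a) (S b))) :
    Tendsto (fun x => ((exceedances (imageJump φ S) (Ioc a b) x).ncard : ℝ) / ν x) (𝓝[>] 0)
      (𝓝 (∫ u in Ioc a b, (φ' (S u))⁺ ^ α)) := by
  have hsub : ∀ s t, a ≤ s → s < t → t ≤ b → ∀ x > 0,
      imageJumpError ν α φ φ' S x a t - imageJumpError ν α φ φ' S x a s =
        imageJumpError ν α φ φ' S x s t := fun s t has hst htb x hx => by
    have hat : a < t := has.trans_lt hst
    have hSt := hS.mono (Icc_subset_Icc_right htb)
    have hrange := Icc_subset_Icc_of_monotoneOn hS le_rfl hat.le htb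
    refine imageJumpError_sub hα.le has hst.le hSt (hφ'.mono hrange) ?_
    exact finite_exceedances_imageJump hSt
      (fun _ => finite_exceedances_of_tendsto (sub_pos.2 hat).ne' (hJ a t le_rfl hat htb))
      (fun y hy => (hφ y (hrange hy)).mono hrange) (hφ'.mono hrange) x hx
  have hlim : Tendsto (fun x => imageJumpError ν α φ φ' S x a b - imageJumpError ν α φ φ' S x a a)
      (𝓝[>] 0) (𝓝 0) := by
    refine tendsto_sub_zero_of_eventually_norm_sub_le hab fun ε hε => ?_
    obtain ⟨w, hw⟩ := exists_eventually_abs_imageJumpError_le hα hν hS hJ hφ hφ' hε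
    refine ⟨w, fun s t has hst htb => ?_⟩
    filter_upwards [hw s t has hst htb, self_mem_nhdsWithin] with x hx hx_pos
    rwa [hsub s t has hst htb x hx_pos]
  simp only [imageJumpError_self, sub_zero] at hlim
  rw [← intervalIntegral.integral_of_le hab]
  exact tendsto_sub_nhds_zero_iff.1 hlim

/-- Finite-`t` gap-counting formula: if the jump counts of the nondecreasing
càdlàg function `S` satisfy `N_y(s,t)/ν̄(y) → t-s` as `y ↓ 0` with
`ν̄(y) = y^{-α} ℓ(1/y)`, `ℓ` slowly varying and `0 < α ≤ 1`, and `φ` is a `C¹`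
increasing diffeomorphism of `[0,∞)` onto `[0,1)`, then the number `Ñ_x(t)` of
jumps of `φ ∘ S` on `(0,t]` of size at least `x` satisfies
`Ñ_x(t)/ν̄(x) → ∫₀^t (φ'(S u))^α du` as `x ↓ 0`. -/
theorem gap_count_transformed (ℓ : ℝ → ℝ)
    (hℓpos : ∀ t : ℝ, 0 < t → 0 < ℓ t)
    (hℓsv : ∀ c : ℝ, 0 < c → Tendsto (fun t : ℝ => ℓ (c * t) / ℓ t) atTop (nhds 1))
    (α : ℝ) (hα0 : 0 < α) (hα1 : α ≤ 1)
    (S : ℝ → ℝ) (hSmono : MonotoneOn S (Set.Ici 0))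
    (hSnonneg : ∀ u : ℝ, 0 ≤ u → 0 ≤ S u)
    (hScadlag : ∀ u : ℝ, 0 ≤ u → ContinuousWithinAt S (Set.Ici u) u)
    (hN : ∀ s t : ℝ, 0 ≤ s → s < t →
      Tendsto (fun y : ℝ =>
          (Set.ncard {u : ℝ | u ∈ Set.Ioc s t ∧ y ≤ S u - Function.leftLim S u} : ℝ) /
            (y ^ (-α) * ℓ (1 / y)))
        (nhdsWithin 0 (Set.Ioi 0)) (nhds (t - s)))
    (φ φ' : ℝ → ℝ)
    (hφ0 : φ 0 = 0)
    (hφ1 : Tendsto φ atTop (nhds 1))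
    (hφd : ∀ y : ℝ, 0 ≤ y → HasDerivWithinAt φ (φ' y) (Set.Ici 0) y)
    (hφ'cont : ContinuousOn φ' (Set.Ici 0))
    (hφ'pos : ∀ y : ℝ, 0 ≤ y → 0 < φ' y) :
    ∀ t : ℝ, 0 < t →
      Tendsto (fun x : ℝ =>
          (Set.ncard {u : ℝ | u ∈ Set.Ioc 0 t ∧
              x ≤ φ (S u) - φ (Function.leftLim S u)} : ℝ) /
            (x ^ (-α) * ℓ (1 / x)))
        (nhdsWithin 0 (Set.Ioi 0))
        (nhds (∫ u in Set.Ioc (0 : ℝ) t, (φ' (S u)) ^ α)) := by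
  intro t ht
  have hpos : ∀ u ∈ Ioc 0 t, (φ' (S u))⁺ = φ' (S u) := fun u hu =>
    posPart_eq_self.2 (hφ'pos _ (hSnonneg u hu.1.le)).le
  have hsub : Icc (S 0) (S t) ⊆ Ici 0 := fun y hy => (hSnonneg 0 le_rfl).trans hy.1
  rw [← setIntegral_congr_fun measurableSet_Ioc fun u hu => congrArg (· ^ α) (hpos u hu)]
  exact gap_count_transformed_general hα0 (regularlyVaryingAtZero_rpow_mul hℓpos hℓsv (-α)) ht.le
    (hSmono.mono Icc_subset_Ici_self) (fun r s hr hrs _ => hN r s hr hrs)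
    (fun y hy => (hφd y (hsub hy)).mono hsub) (hφ'cont.mono hsub)
end

section
/- Let ℓ : (0,∞) → (0,∞) be slowly varying at ∞ (i.e., for every c > 0, ℓ(ct)/ℓ(t) → 1 as t → ∞), let 0 < α < 1 and L > 0. Let γ be a Borel measure on (0,1] with tail γ̄(x) = γ([x,1]) finite for every x > 0, and assume γ̄(x) x^α / ℓ(1/x) → L as x ↓ 0. Then for every integer r ≥ 1, as n → ∞, binom(n,r) ∫₀¹ x^r (1−x)^{n−r} γ(dx) / (n^α ℓ(n)) → (α Γ(r−α) / r!) · L, where Γ is the Gamma function. -/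
open Filter MeasureTheory Real

/-!
Let `T t = γ [1/t, 1]` and let `B n r` be the Bernstein polynomials. The derivative of
`s ↦ B n r (s / n)` is `B (n-1) (r-1) (s / n) - B (n-1) r (s / n)`, so the layer cake formula gives
`∫ B n r dγ = ∫ (B (n-1) (r-1) (s / n) - B (n-1) r (s / n)) T (n / s) ds`.
After division by `T n`, the Poisson limit theorem and the regular variation of `T` show that the
integrand tends to `e⁻ˢ (s^(r-1) / (r-1)! - s^r / r!) s^(-α)`, whose integral is `α Γ(r - α) / r!`.
For domination, a Bernstein polynomial is at most a constant times its Poisson limit, and, since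
`T` is monotone, iterating `T (2 t) ≤ 2^β T t` (for any `β > α`) bounds `T (n / s) / T n`.
-/

section RegularVariation

/-- `f` is regularly varying at `∞` with index `ρ`; slow variation is the case `ρ = 0`. -/
def IsRegularlyVarying (f : ℝ → ℝ) (ρ : ℝ) : Prop :=
  ∀ c : ℝ, 0 < c → Tendsto (fun t : ℝ => f (c * t) / f t) atTop (nhds (c ^ ρ))

variable {f g : ℝ → ℝ} {ρ σ β L : ℝ}

lemma isRegularlyVarying_rpow (ρ : ℝ) : IsRegularlyVarying (fun t => t ^ ρ) ρ := by
  intro c hc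
  refine tendsto_const_nhds.congr' ?_
  filter_upwards [eventually_gt_atTop 0] with t ht
  rw [mul_rpow hc.le ht.le, mul_div_cancel_right₀ _ (rpow_pos_of_pos ht ρ).ne']

namespace IsRegularlyVarying

lemma mul (hf : IsRegularlyVarying f ρ) (hg : IsRegularlyVarying g σ) :
    IsRegularlyVarying (fun t => f t * g t) (ρ + σ) := by
  intro c hc
  rw [rpow_add hc]
  exact ((hf c hc).mul (hg c hc)).congr fun t => div_mul_div_comm _ _ _ _

lemma of_tendsto_div (hf : IsRegularlyVarying f ρ)
    (hgf : Tendsto (fun t => g t / f t) atTop (nhds L)) (hL : L ≠ 0) :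
    IsRegularlyVarying g ρ := by
  intro c hc
  have hscale : Tendsto (fun t : ℝ => c * t) atTop atTop := tendsto_id.const_mul_atTop hc
  have hlim := ((hgf.comp hscale).mul (hf c hc)).div hgf hL
  rw [mul_div_cancel_left₀ _ hL] at hlim
  refine hlim.congr' ?_
  filter_upwards [hgf.eventually_ne hL, (hgf.comp hscale).eventually_ne hL] with t ht hct
  have hft : f t ≠ 0 := (div_ne_zero_iff.mp ht).2
  have hfct : f (c * t) ≠ 0 := (div_ne_zero_iff.mp hct).2
  simp only [Pi.div_apply, Function.comp_apply]
  field_simp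

lemma eventually_ne_zero (hf : IsRegularlyVarying f ρ) : ∀ᶠ t in atTop, f t ≠ 0 := by
  filter_upwards [(hf 1 one_pos).eventually_ne (rpow_pos_of_pos one_pos ρ).ne'] with t ht
  exact (div_ne_zero_iff.mp ht).2

lemma eventually_two_mul_le (hf : IsRegularlyVarying f ρ) (hf_nonneg : ∀ t, 0 ≤ f t)
    (hρβ : ρ < β) : ∀ᶠ t in atTop, f (2 * t) ≤ 2 ^ β * f t := by
  have hlt : (2 : ℝ) ^ ρ < 2 ^ β := rpow_lt_rpow_of_exponent_lt one_lt_two hρβ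
  filter_upwards [(hf 2 two_pos).eventually_lt_const hlt, hf.eventually_ne_zero] with t ht hne
  exact ((div_lt_iff₀ ((hf_nonneg t).lt_of_ne' hne)).mp ht).le

end IsRegularlyVarying

lemma le_pow_mul_of_two_mul_le {C t₀ t : ℝ} (hC : 0 ≤ C)
    (hdouble : ∀ t, t₀ ≤ t → f (2 * t) ≤ C * f t) (ht₀ : t₀ ≤ t) (ht : 0 ≤ t) (k : ℕ) :
    f (2 ^ k * t) ≤ C ^ k * f t := by
  induction k with
  | zero => simp
  | succ k ih =>
    have hle : t₀ ≤ 2 ^ k * t :=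
      ht₀.trans (le_mul_of_one_le_left ht (one_le_pow₀ one_le_two))
    calc f (2 ^ (k + 1) * t) = f (2 * (2 ^ k * t)) := by ring_nf
      _ ≤ C * f (2 ^ k * t) := hdouble _ hle
      _ ≤ C * (C ^ k * f t) := by gcongr
      _ = C ^ (k + 1) * f t := by ring

theorem IsRegularlyVarying.potter_bound_of_monotoneOn (hf : IsRegularlyVarying f ρ)
    (hf_mono : MonotoneOn f (Set.Ioi 0)) (hf_nonneg : ∀ t, 0 ≤ f t) (hρβ : ρ < β) (hβ : 0 ≤ β) :
    ∀ᶠ t in atTop, ∀ c, 0 < c → f (c * t) ≤ (1 + 2 ^ β * c ^ β) * f t := by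
  obtain ⟨t₀, hdouble⟩ := eventually_atTop.mp (hf.eventually_two_mul_le hf_nonneg hρβ)
  filter_upwards [eventually_ge_atTop t₀, eventually_gt_atTop 0] with t ht₀ ht c hc
  have hft := hf_nonneg t
  have hct : 0 < c * t := mul_pos hc ht
  obtain hc1 | hc1 := le_total c 1
  · calc f (c * t) ≤ f t := hf_mono hct ht (mul_le_of_le_one_left ht.le hc1)
      _ ≤ (1 + 2 ^ β * c ^ β) * f t :=
          le_mul_of_one_le_left hft (le_add_of_nonneg_right (by positivity))
  · obtain ⟨k, hkc, hck⟩ := exists_nat_pow_near hc1 one_lt_two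
    calc f (c * t) ≤ f (2 ^ (k + 1) * t) :=
          hf_mono hct (Set.mem_Ioi.mpr (by positivity)) (by gcongr)
      _ ≤ (2 ^ β) ^ (k + 1) * f t :=
          le_pow_mul_of_two_mul_le (by positivity) hdouble ht₀ ht.le _
      _ = 2 ^ β * (2 ^ k) ^ β * f t := by rw [pow_succ', rpow_pow_comm two_pos.le]
      _ ≤ 2 ^ β * c ^ β * f t := by gcongr
      _ ≤ (1 + 2 ^ β * c ^ β) * f t := by gcongr; exact le_add_of_nonneg_left zero_le_one

end RegularVariation

section LayerCake

variable {Ω : Type*} [MeasurableSpace Ω] {μ : Measure Ω} {f : Ω → ℝ} {g : ℝ → ℝ}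

lemma integrable_and_integral_primitive_comp_of_nonneg (hf_nonneg : 0 ≤ᵐ[μ] f)
    (hf : AEMeasurable f μ) (hg_nonneg : ∀ t, 0 ≤ g t)
    (hg : ∀ a b, IntervalIntegrable g volume a b) (hfin : ∀ t, 0 < t → μ {ω | t ≤ f ω} ≠ ⊤)
    (hint : IntegrableOn (fun t => g t * μ.real {ω | t ≤ f ω}) (Set.Ioi 0)) :
    Integrable (fun ω => ∫ t in 0..f ω, g t) μ ∧
      ∫ ω, (∫ t in 0..f ω, g t) ∂μ = ∫ t in Set.Ioi 0, g t * μ.real {ω | t ≤ f ω} := by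
  have hprim_nonneg : 0 ≤ᵐ[μ] fun ω => ∫ t in 0..f ω, g t := by
    filter_upwards [hf_nonneg] with ω hω
    exact intervalIntegral.integral_nonneg hω fun t _ => hg_nonneg t
  have hprim_meas : AEStronglyMeasurable (fun ω => ∫ t in 0..f ω, g t) μ :=
    (intervalIntegral.continuous_primitive hg 0).comp_aestronglyMeasurable hf.aestronglyMeasurable
  have htail_nonneg : ∀ t, 0 ≤ g t * μ.real {ω | t ≤ f ω} := fun t =>
    mul_nonneg (hg_nonneg t) measureReal_nonneg
  have hlintegral : ∫⁻ ω, ENNReal.ofReal (∫ t in 0..f ω, g t) ∂μ =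
      ENNReal.ofReal (∫ t in Set.Ioi 0, g t * μ.real {ω | t ≤ f ω}) := by
    rw [lintegral_comp_eq_lintegral_meas_le_mul μ hf_nonneg hf (fun t _ => hg 0 t)
        (ae_of_all _ hg_nonneg),
      ofReal_integral_eq_lintegral_ofReal hint (ae_of_all _ htail_nonneg)]
    refine setLIntegral_congr_fun measurableSet_Ioi fun t ht => ?_
    rw [ENNReal.ofReal_mul (hg_nonneg t), ofReal_measureReal (hfin t ht), mul_comm]
  refine ⟨⟨hprim_meas, ?_⟩, ?_⟩
  · rw [hasFiniteIntegral_iff_ofReal hprim_nonneg, hlintegral]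
    exact ENNReal.ofReal_lt_top
  · rw [integral_eq_lintegral_of_nonneg_ae hprim_nonneg hprim_meas, hlintegral,
      ENNReal.toReal_ofReal (integral_nonneg htail_nonneg)]

theorem integral_primitive_comp_eq_integral_mul_meas_le (hf_nonneg : 0 ≤ᵐ[μ] f)
    (hf : AEMeasurable f μ) (hg : ∀ a b, IntervalIntegrable g volume a b)
    (hfin : ∀ t, 0 < t → μ {ω | t ≤ f ω} ≠ ⊤)
    (hint : IntegrableOn (fun t => g t * μ.real {ω | t ≤ f ω}) (Set.Ioi 0)) :
    ∫ ω, (∫ t in 0..f ω, g t) ∂μ = ∫ t in Set.Ioi 0, g t * μ.real {ω | t ≤ f ω} := by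
  have hint_abs : IntegrableOn (fun t => |g t| * μ.real {ω | t ≤ f ω}) (Set.Ioi 0) :=
    hint.abs.congr (ae_of_all _ fun t => by simp only [abs_mul, abs_of_nonneg measureReal_nonneg])
  have hint_sub : IntegrableOn (fun t => (|g t| - g t) * μ.real {ω | t ≤ f ω}) (Set.Ioi 0) :=
    (hint_abs.sub hint).congr (ae_of_all _ fun t => (sub_mul _ _ _).symm)
  obtain ⟨habs, habs_eq⟩ := integrable_and_integral_primitive_comp_of_nonneg hf_nonneg hf
    (fun t => abs_nonneg (g t)) (fun a b => (hg a b).abs) hfin hint_abs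
  obtain ⟨hsub, hsub_eq⟩ := integrable_and_integral_primitive_comp_of_nonneg hf_nonneg hf
    (fun t => sub_nonneg.mpr (le_abs_self (g t))) (fun a b => (hg a b).abs.sub (hg a b)) hfin
    hint_sub
  calc ∫ ω, (∫ t in 0..f ω, g t) ∂μ
      = ∫ ω, ((∫ t in 0..f ω, |g t|) - ∫ t in 0..f ω, (|g t| - g t)) ∂μ := by
        congr with ω
        rw [intervalIntegral.integral_sub (hg _ _).abs (hg _ _), sub_sub_cancel]
    _ = (∫ t in Set.Ioi 0, |g t| * μ.real {ω | t ≤ f ω}) -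
          ∫ t in Set.Ioi 0, (|g t| - g t) * μ.real {ω | t ≤ f ω} := by
        rw [integral_sub habs hsub, habs_eq, hsub_eq]
    _ = ∫ t in Set.Ioi 0, g t * μ.real {ω | t ≤ f ω} := by
        rw [← integral_sub hint_abs hint_sub]
        congr with t
        ring

end LayerCake

section Tail

/-- The tail `γ̄(x) = γ [x, 1]` of a measure on `(0, 1]`. It is real-valued, so it is meaningful
only where `γ [x, 1] < ∞`. -/
noncomputable def unitTail (γ : Measure ℝ) (x : ℝ) : ℝ :=
  γ.real (Set.Icc x 1)

variable {γ : Measure ℝ}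

lemma unitTail_nonneg (x : ℝ) : 0 ≤ unitTail γ x :=
  measureReal_nonneg

lemma unitTail_of_one_lt {x : ℝ} (hx : 1 < x) : unitTail γ x = 0 := by
  rw [unitTail, Set.Icc_eq_empty hx.not_ge, measureReal_empty]

lemma measurable_unitTail : Measurable (unitTail γ) :=
  Antitone.measurable (f := fun x => γ (Set.Icc x 1))
    (fun _ _ h => measure_mono (Set.Icc_subset_Icc_left h)) |>.ennreal_toReal

lemma monotoneOn_unitTail_inv (hfin : ∀ x, 0 < x → γ (Set.Icc x 1) ≠ ⊤) :
    MonotoneOn (fun t => unitTail γ t⁻¹) (Set.Ioi 0) := by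
  intro s hs t ht hst
  exact measureReal_mono (Set.Icc_subset_Icc_left (inv_anti₀ hs hst)) (hfin _ (inv_pos.mpr ht))

lemma integral_primitive_mul_eq_integral_mul_unitTail (hfin : ∀ x, 0 < x → γ (Set.Icc x 1) ≠ ⊤)
    {g : ℝ → ℝ} (hg : ∀ a b, IntervalIntegrable g volume a b) {c : ℝ} (hc : 0 < c)
    (hint : IntegrableOn (fun s => g s * unitTail γ (s / c)) (Set.Ioi 0)) :
    ∫ x in Set.Ioc (0 : ℝ) 1, (∫ s in 0..c * x, g s) ∂γ
      = ∫ s in Set.Ioi 0, g s * unitTail γ (s / c) := by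
  have hlevel : ∀ s, 0 < s →
      γ.restrict (Set.Ioc 0 1) {x | s ≤ c * x} = γ (Set.Icc (s / c) 1) := by
    intro s hs
    rw [Measure.restrict_apply (measurableSet_le measurable_const (measurable_const_mul c))]
    congr 1
    ext x
    simp only [Set.mem_inter_iff, Set.mem_ofPred_eq, Set.mem_Ioc, Set.mem_Icc, div_le_iff₀' hc]
    exact ⟨fun h => ⟨h.1, h.2.2⟩, fun h => ⟨h.1, pos_of_mul_pos_right (hs.trans_le h.1) hc.le, h.2⟩⟩
  have htail : Set.EqOn (fun s => g s * unitTail γ (s / c))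
      (fun s => g s * (γ.restrict (Set.Ioc 0 1)).real {x | s ≤ c * x}) (Set.Ioi 0) := by
    intro s hs
    simp only [unitTail, Measure.real, hlevel s hs]
  rw [integral_primitive_comp_eq_integral_mul_meas_le
    (by filter_upwards [ae_restrict_mem measurableSet_Ioc] with x hx using (mul_pos hc hx.1).le)
    (measurable_const_mul c).aemeasurable hg
    (fun s hs => by rw [hlevel s hs]; exact hfin _ (div_pos hs hc))
    (hint.congr_fun htail measurableSet_Ioi)]
  exact (setIntegral_congr_fun measurableSet_Ioi htail).symm

section Abelian

variable {α β : ℝ} {h : ℝ → ℝ} {g : ℕ → ℝ → ℝ}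

lemma IsRegularlyVarying.eventually_abs_mul_unitTail_div_le
    (hγ : IsRegularlyVarying (fun t => unitTail γ t⁻¹) α)
    (hfin : ∀ x, 0 < x → γ (Set.Icc x 1) ≠ ⊤) (hαβ : α < β) (hβ : 0 ≤ β)
    (hgh : ∀ n : ℕ, ∀ s : ℝ, 0 < s → s ≤ n → |g n s| ≤ h s) :
    ∀ᶠ n : ℕ in atTop, ∀ s, 0 < s → |g n s * (unitTail γ (s / n) / unitTail γ (n : ℝ)⁻¹)|
      ≤ h s + 2 ^ β * (h s * s ^ (-β)) := by
  have hpotter := hγ.potter_bound_of_monotoneOn (monotoneOn_unitTail_inv hfin)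
    (fun t => unitTail_nonneg t⁻¹) hαβ hβ
  filter_upwards [tendsto_natCast_atTop_atTop.eventually hpotter,
    tendsto_natCast_atTop_atTop.eventually hγ.eventually_ne_zero, eventually_gt_atTop 0]
    with n hn hne hn0 s hs
  have hn0' : (0 : ℝ) < n := Nat.cast_pos.mpr hn0
  have hpos : 0 < unitTail γ (n : ℝ)⁻¹ := (unitTail_nonneg _).lt_of_ne' hne
  have hh : 0 ≤ h s := (abs_nonneg _).trans (hgh ⌈s⌉₊ s hs (Nat.le_ceil s))
  obtain hsn | hsn := le_or_gt s n
  · have hratio : unitTail γ (s / n) / unitTail γ (n : ℝ)⁻¹ ≤ 1 + 2 ^ β * s ^ (-β) := by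
      have := hn s⁻¹ (inv_pos.mpr hs)
      rwa [mul_inv, inv_inv, ← div_eq_mul_inv, inv_rpow hs.le, ← rpow_neg hs.le,
        ← div_le_iff₀ hpos] at this
    calc |g n s * (unitTail γ (s / n) / unitTail γ (n : ℝ)⁻¹)|
        = |g n s| * (unitTail γ (s / n) / unitTail γ (n : ℝ)⁻¹) := by
          rw [abs_mul, abs_of_nonneg (div_nonneg (unitTail_nonneg _) hpos.le)]
      _ ≤ h s * (1 + 2 ^ β * s ^ (-β)) :=
          mul_le_mul (hgh n s hs hsn) hratio (div_nonneg (unitTail_nonneg _) hpos.le) hh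
      _ = h s + 2 ^ β * (h s * s ^ (-β)) := by ring
  · rw [unitTail_of_one_lt ((one_lt_div hn0').mpr hsn), zero_div, mul_zero, abs_zero]
    positivity

theorem IsRegularlyVarying.tendsto_integral_primitive_div_unitTail
    (hγ : IsRegularlyVarying (fun t => unitTail γ t⁻¹) α)
    (hfin : ∀ x, 0 < x → γ (Set.Icc x 1) ≠ ⊤) (hαβ : α < β) (hβ : 0 ≤ β)
    (hg : ∀ n, Continuous (g n)) {κ : ℝ → ℝ}
    (hgκ : ∀ s, 0 < s → Tendsto (fun n => g n s) atTop (nhds (κ s)))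
    (hgh : ∀ n : ℕ, ∀ s : ℝ, 0 < s → s ≤ n → |g n s| ≤ h s)
    (hh : IntegrableOn h (Set.Ioi 0)) (hhβ : IntegrableOn (fun s => h s * s ^ (-β)) (Set.Ioi 0)) :
    Tendsto (fun n : ℕ => (∫ x in Set.Ioc (0 : ℝ) 1, (∫ s in 0..n * x, g n s) ∂γ) /
        unitTail γ (n : ℝ)⁻¹)
      atTop (nhds (∫ s in Set.Ioi 0, κ s * s ^ (-α))) := by
  let F : ℕ → ℝ → ℝ := fun n s => g n s * (unitTail γ (s / n) / unitTail γ (n : ℝ)⁻¹)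
  have hF_meas : ∀ n, Measurable (F n) := fun n =>
    (hg n).measurable.mul
      ((measurable_unitTail.comp (measurable_id.div_const _)).div_const _)
  have hdom : IntegrableOn (fun s => h s + 2 ^ β * (h s * s ^ (-β))) (Set.Ioi 0) :=
    hh.add (hhβ.const_mul _)
  have hF_le : ∀ᶠ n in atTop, ∀ᵐ s ∂volume.restrict (Set.Ioi 0),
      ‖F n s‖ ≤ h s + 2 ^ β * (h s * s ^ (-β)) := by
    filter_upwards [hγ.eventually_abs_mul_unitTail_div_le hfin hαβ hβ hgh] with n hn
    exact ae_restrict_of_forall_mem measurableSet_Ioi hn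
  have hF_lim : ∀ s ∈ Set.Ioi (0 : ℝ),
      Tendsto (fun n => F n s) atTop (nhds (κ s * s ^ (-α))) := by
    intro s hs
    have hratio := (hγ s⁻¹ (inv_pos.mpr hs)).comp tendsto_natCast_atTop_atTop
    simp only [Function.comp_def, mul_inv, inv_inv, ← div_eq_mul_inv, inv_rpow (le_of_lt hs),
      ← rpow_neg (le_of_lt hs)] at hratio
    exact (hgκ s hs).mul hratio
  refine (tendsto_integral_filter_of_dominated_convergence _
    (Eventually.of_forall fun n => (hF_meas n).aestronglyMeasurable) hF_le hdom
    (ae_restrict_of_forall_mem measurableSet_Ioi hF_lim)).congr' ?_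
  filter_upwards [hF_le, tendsto_natCast_atTop_atTop.eventually hγ.eventually_ne_zero,
    eventually_gt_atTop 0] with n hn hne hn0
  have hF_eq : ∀ s, F n s = g n s * unitTail γ (s / n) / unitTail γ (n : ℝ)⁻¹ := fun s =>
    (mul_div_assoc _ _ _).symm
  have hint : IntegrableOn (fun s => g n s * unitTail γ (s / n)) (Set.Ioi 0) :=
    ((hdom.mono' (hF_meas n).aestronglyMeasurable hn).mul_const (unitTail γ (n : ℝ)⁻¹)).congr
      (ae_of_all _ fun s => by simp only [hF_eq, div_mul_cancel₀ _ hne])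
  rw [integral_primitive_mul_eq_integral_mul_unitTail hfin
    (fun a b => (hg n).intervalIntegrable a b) (Nat.cast_pos.mpr hn0) hint, ← integral_div]
  simp only [hF_eq]

end Abelian

end Tail

section PoissonWeight

/-- The mass `e⁻ˢ s^k / k!` that the Poisson law of parameter `s` gives to `k`, as a function of a
real parameter. -/
noncomputable def poissonWeight (k : ℕ) (s : ℝ) : ℝ :=
  exp (-s) * s ^ k / k.factorial

variable {k : ℕ} {p : ℝ}

lemma poissonWeight_mul_rpow {s : ℝ} (hs : 0 < s) :
    poissonWeight k s * s ^ (-p) =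
      exp (-s) * s ^ ((k : ℝ) + 1 - p - 1) / k.factorial := by
  rw [show (k : ℝ) + 1 - p - 1 = k + -p by ring, rpow_add hs, rpow_natCast, poissonWeight]
  ring

lemma integrableOn_poissonWeight_mul_rpow (hp : p < k + 1) :
    IntegrableOn (fun s => poissonWeight k s * s ^ (-p)) (Set.Ioi 0) :=
  IntegrableOn.congr_fun ((GammaIntegral_convergent (sub_pos.mpr hp)).div_const _)
    (fun _ hs => (poissonWeight_mul_rpow hs).symm) measurableSet_Ioi

lemma integrableOn_poissonWeight : IntegrableOn (poissonWeight k) (Set.Ioi 0) := by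
  simpa only [neg_zero, rpow_zero, mul_one] using
    integrableOn_poissonWeight_mul_rpow (k := k) (p := 0) (by positivity)

lemma integral_poissonWeight_mul_rpow (hp : p < k + 1) :
    ∫ s in Set.Ioi 0, poissonWeight k s * s ^ (-p) = Gamma (k + 1 - p) / k.factorial := by
  rw [setIntegral_congr_fun measurableSet_Ioi fun s hs => poissonWeight_mul_rpow hs, integral_div,
    Gamma_eq_integral (sub_pos.mpr hp)]

lemma integral_poissonWeight_sub_succ_mul_rpow (hp : p < k + 1) :
    ∫ s in Set.Ioi 0, (poissonWeight k s - poissonWeight (k + 1) s) * s ^ (-p)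
      = p * Gamma (k + 1 - p) / (k + 1).factorial := by
  have hp' : p < (k + 1 : ℕ) + 1 := by push_cast; linarith
  have hGamma : Gamma ((k + 1 : ℕ) + 1 - p) = (k + 1 - p) * Gamma (k + 1 - p) := by
    rw [← Gamma_add_one (sub_pos.mpr hp).ne']
    push_cast
    ring_nf
  simp only [sub_mul]
  rw [integral_sub (integrableOn_poissonWeight_mul_rpow hp)
      (integrableOn_poissonWeight_mul_rpow hp'), integral_poissonWeight_mul_rpow hp,
    integral_poissonWeight_mul_rpow hp', hGamma, Nat.factorial_succ]
  push_cast
  field_simp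
  ring

end PoissonWeight

section Bernstein

lemma eval_bernsteinPolynomial (n k : ℕ) (x : ℝ) :
    (bernsteinPolynomial ℝ n k).eval x = n.choose k * x ^ k * (1 - x) ^ (n - k) := by
  simp [bernsteinPolynomial]

lemma abs_eval_bernsteinPolynomial_le (n k : ℕ) {x : ℝ} (hx0 : 0 ≤ x) (hx1 : x ≤ 1) :
    |(bernsteinPolynomial ℝ n k).eval x| ≤ exp (k + 1) * poissonWeight k ((n + 1) * x) := by
  have hsub : (n : ℝ) ≤ (n - k : ℕ) + k := by exact_mod_cast le_tsub_add
  have hpow : (1 - x) ^ (n - k) ≤ exp (k + 1) * exp (-((n + 1) * x)) :=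
    calc (1 - x) ^ (n - k) ≤ exp (-x) ^ (n - k) := by
          gcongr
          exact one_sub_le_exp_neg x
      _ = exp ((n - k : ℕ) * -x) := (exp_nat_mul _ _).symm
      _ ≤ exp (k + 1 + -((n + 1) * x)) := by
          gcongr
          nlinarith [(Nat.cast_nonneg k : (0 : ℝ) ≤ k)]
      _ = exp (k + 1) * exp (-((n + 1) * x)) := exp_add _ _
  rw [eval_bernsteinPolynomial, abs_of_nonneg (by positivity)]
  calc n.choose k * x ^ k * (1 - x) ^ (n - k)
      ≤ n ^ k / k.factorial * x ^ k * (exp (k + 1) * exp (-((n + 1) * x))) := by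
        gcongr
        exact Nat.choose_le_pow_div k n
    _ ≤ (n + 1) ^ k / k.factorial * x ^ k * (exp (k + 1) * exp (-((n + 1) * x))) := by
        gcongr
        exact le_add_of_nonneg_right zero_le_one
    _ = exp (k + 1) * poissonWeight k ((n + 1) * x) := by
        rw [poissonWeight, mul_pow]
        ring

lemma abs_eval_bernsteinPolynomial_pred_div_le (k : ℕ) {n : ℕ} {s : ℝ} (hs : 0 < s) (hsn : s ≤ n) :
    |(bernsteinPolynomial ℝ (n - 1) k).eval (s / n)| ≤ exp (k + 1) * poissonWeight k s := by
  have hn : (0 : ℝ) < n := hs.trans_le hsn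
  have hpred : ((n - 1 : ℕ) : ℝ) + 1 = n := by
    exact_mod_cast Nat.sub_add_cancel (Nat.cast_pos.mp hn)
  have hle := abs_eval_bernsteinPolynomial_le (n - 1) k (div_pos hs hn).le ((div_le_one hn).mpr hsn)
  rwa [hpred, mul_div_cancel₀ _ hn.ne'] at hle

lemma tendsto_eval_bernsteinPolynomial_pred_div (k : ℕ) (s : ℝ) :
    Tendsto (fun n : ℕ => (bernsteinPolynomial ℝ (n - 1) k).eval (s / n)) atTop
      (nhds (poissonWeight k s)) := by
  rw [← tendsto_add_atTop_iff_nat 1]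
  simp only [eval_bernsteinPolynomial, Nat.add_sub_cancel]
  refine ProbabilityTheory.tendsto_choose_mul_pow_of_tendsto_mul_atTop k ?_
  have hlim := (tendsto_natCast_div_add_atTop (1 : ℝ)).mul_const s
  rw [one_mul] at hlim
  refine hlim.congr fun n => ?_
  push_cast
  ring

/-- The `s`-derivative of the rescaled Bernstein polynomial `B n (r + 1) (s / n)`, by the recursion
for derivatives of Bernstein polynomials. -/
noncomputable def scaledBernsteinDeriv (r n : ℕ) (s : ℝ) : ℝ :=
  (bernsteinPolynomial ℝ (n - 1) r).eval (s / n) -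
    (bernsteinPolynomial ℝ (n - 1) (r + 1)).eval (s / n)

lemma continuous_scaledBernsteinDeriv (r n : ℕ) : Continuous (scaledBernsteinDeriv r n) := by
  unfold scaledBernsteinDeriv
  fun_prop

lemma integral_scaledBernsteinDeriv (r : ℕ) {n : ℕ} (hn : 0 < n) (x : ℝ) :
    ∫ s in 0..n * x, scaledBernsteinDeriv r n s = (bernsteinPolynomial ℝ n (r + 1)).eval x := by
  have hn' : (n : ℝ) ≠ 0 := Nat.cast_ne_zero.mpr hn.ne'
  have hderiv : ∀ s : ℝ, HasDerivAt (fun s : ℝ => (bernsteinPolynomial ℝ n (r + 1)).eval (s / n))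
      (scaledBernsteinDeriv r n s) s := by
    intro s
    refine (((bernsteinPolynomial ℝ n (r + 1)).hasDerivAt (s / n)).comp s
      ((hasDerivAt_id s).div_const (n : ℝ))).congr_deriv ?_
    rw [bernsteinPolynomial.derivative_succ, scaledBernsteinDeriv, Polynomial.eval_mul,
      Polynomial.eval_natCast, Polynomial.eval_sub]
    field_simp
  rw [intervalIntegral.integral_eq_sub_of_hasDerivAt (fun s _ => hderiv s)
      ((continuous_scaledBernsteinDeriv r n).intervalIntegrable _ _),
    mul_div_cancel_left₀ _ hn', zero_div, bernsteinPolynomial.eval_at_0, if_neg r.succ_ne_zero,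
    sub_zero]

theorem IsRegularlyVarying.tendsto_integral_bernsteinPolynomial_div_unitTail {γ : Measure ℝ}
    {α : ℝ} {r : ℕ} (hγ : IsRegularlyVarying (fun t => unitTail γ t⁻¹) α)
    (hfin : ∀ x, 0 < x → γ (Set.Icc x 1) ≠ ⊤) (hαr : α < r + 1) :
    Tendsto (fun n : ℕ => (∫ x in Set.Ioc (0 : ℝ) 1, (bernsteinPolynomial ℝ n (r + 1)).eval x ∂γ) /
        unitTail γ (n : ℝ)⁻¹)
      atTop (nhds (α * Gamma (r + 1 - α) / (r + 1).factorial)) := by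
  obtain ⟨β, hβ, hβr⟩ := exists_between (max_lt hαr (by positivity : (0 : ℝ) < r + 1))
  obtain ⟨hαβ, hβ0⟩ := max_lt_iff.mp hβ
  have hβr' : β < (r + 1 : ℕ) + 1 := by push_cast; linarith
  let h : ℝ → ℝ := fun s => exp (r + 1) * poissonWeight r s +
    exp ((r + 1 : ℕ) + 1) * poissonWeight (r + 1) s
  have hgh : ∀ n : ℕ, ∀ s : ℝ, 0 < s → s ≤ n → |scaledBernsteinDeriv r n s| ≤ h s :=
    fun n s hs hsn => (abs_sub _ _).trans
      (add_le_add (abs_eval_bernsteinPolynomial_pred_div_le r hs hsn)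
        (abs_eval_bernsteinPolynomial_pred_div_le (r + 1) hs hsn))
  have hh : IntegrableOn h (Set.Ioi 0) :=
    (integrableOn_poissonWeight.const_mul _).add (integrableOn_poissonWeight.const_mul _)
  have hhβ : IntegrableOn (fun s => h s * s ^ (-β)) (Set.Ioi 0) := by
    simp only [h, add_mul, mul_assoc]
    exact ((integrableOn_poissonWeight_mul_rpow hβr).const_mul _).add
      ((integrableOn_poissonWeight_mul_rpow hβr').const_mul _)
  have hlim := hγ.tendsto_integral_primitive_div_unitTail hfin hαβ hβ0.le
    (continuous_scaledBernsteinDeriv r)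
    (fun s _ => (tendsto_eval_bernsteinPolynomial_pred_div r s).sub
      (tendsto_eval_bernsteinPolynomial_pred_div (r + 1) s)) hgh hh hhβ
  rw [integral_poissonWeight_sub_succ_mul_rpow hαr] at hlim
  refine hlim.congr' ?_
  filter_upwards [eventually_gt_atTop 0] with n hn
  simp only [integral_scaledBernsteinDeriv r hn]

end Bernstein

section Tauberian

variable {ℓ : ℝ → ℝ} {α L : ℝ} {γ : Measure ℝ}

lemma tendsto_unitTail_inv_div
    (hlim : Tendsto (fun x : ℝ => (γ (Set.Icc x 1)).toReal * x ^ α / ℓ (1 / x))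
      (nhdsWithin 0 (Set.Ioi 0)) (nhds L)) :
    Tendsto (fun t => unitTail γ t⁻¹ / (t ^ α * ℓ t)) atTop (nhds L) := by
  refine (hlim.comp tendsto_inv_atTop_nhdsGT_zero).congr' ?_
  filter_upwards [eventually_gt_atTop 0] with t ht
  rw [Function.comp_apply, one_div, inv_inv, inv_rpow ht.le, ← div_eq_mul_inv, div_div]
  rfl

theorem tauberian_multiplicity_general
    (hℓsv : ∀ c : ℝ, 0 < c → Tendsto (fun t : ℝ => ℓ (c * t) / ℓ t) atTop (nhds 1))
    (hL : L ≠ 0) (hfin : ∀ x : ℝ, 0 < x → γ (Set.Icc x 1) ≠ ⊤)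
    (hlim : Tendsto (fun x : ℝ => (γ (Set.Icc x 1)).toReal * x ^ α / ℓ (1 / x))
      (nhdsWithin 0 (Set.Ioi 0)) (nhds L))
    {r : ℕ} (hr : 1 ≤ r) (hαr : α < r) :
    Tendsto (fun n : ℕ =>
        ((n.choose r : ℝ) * ∫ x in Set.Ioc (0 : ℝ) 1, x ^ r * (1 - x) ^ (n - r) ∂γ) /
          ((n : ℝ) ^ α * ℓ n))
      atTop (nhds (α * Gamma ((r : ℝ) - α) / (Nat.factorial r : ℝ) * L)) := by
  obtain ⟨r, rfl⟩ := Nat.exists_eq_add_of_le' hr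
  have hℓ : IsRegularlyVarying ℓ 0 := by simpa only [IsRegularlyVarying, rpow_zero] using hℓsv
  have htail := tendsto_unitTail_inv_div hlim
  have hγ : IsRegularlyVarying (fun t => unitTail γ t⁻¹) α := by
    simpa only [add_zero] using ((isRegularlyVarying_rpow α).mul hℓ).of_tendsto_div htail hL
  push_cast at hαr ⊢
  refine ((hγ.tendsto_integral_bernsteinPolynomial_div_unitTail hfin hαr).mul
    (htail.comp tendsto_natCast_atTop_atTop)).congr' ?_
  filter_upwards [tendsto_natCast_atTop_atTop.eventually hγ.eventually_ne_zero] with n hn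
  simp only [eval_bernsteinPolynomial, mul_assoc, integral_const_mul]
  exact div_mul_div_cancel₀ hn

end Tauberian

/-- If `ℓ` is slowly varying at `∞`, `0 < α < 1`, `L > 0`, and `γ` is a Borel measure
on `(0,1]` with finite tail `γ̄(x) = γ([x,1])` satisfying `γ̄(x) x^α / ℓ(1/x) → L`
as `x ↓ 0`, then for every `r ≥ 1`,
`binom(n,r) ∫₀¹ x^r (1-x)^{n-r} γ(dx) / (n^α ℓ(n)) → (α Γ(r-α)/r!) L`. -/
theorem tauberian_multiplicity (ℓ : ℝ → ℝ)
    (hℓpos : ∀ t : ℝ, 0 < t → 0 < ℓ t)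
    (hℓsv : ∀ c : ℝ, 0 < c → Tendsto (fun t : ℝ => ℓ (c * t) / ℓ t) atTop (nhds 1))
    (α L : ℝ) (hα0 : 0 < α) (hα1 : α < 1) (hL : 0 < L)
    (γ : Measure ℝ) (hsupp : γ (Set.Ioc (0 : ℝ) 1)ᶜ = 0)
    (hfin : ∀ x : ℝ, 0 < x → γ (Set.Icc x 1) ≠ ⊤)
    (hlim : Tendsto (fun x : ℝ => (γ (Set.Icc x 1)).toReal * x ^ α / ℓ (1 / x))
      (nhdsWithin 0 (Set.Ioi 0)) (nhds L)) :
    ∀ r : ℕ, 1 ≤ r →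
      Tendsto (fun n : ℕ =>
          ((n.choose r : ℝ) * ∫ x in Set.Ioc (0 : ℝ) 1, x ^ r * (1 - x) ^ (n - r) ∂γ) /
            ((n : ℝ) ^ α * ℓ n))
        atTop (nhds (α * Real.Gamma ((r : ℝ) - α) / (Nat.factorial r : ℝ) * L)) :=
  fun _ hr => tauberian_multiplicity_general hℓsv hL.ne' hfin hlim hr
    (hα1.trans_le (Nat.one_le_cast.mpr hr))
end

section
/- Let d > 0 and let S : [0,∞) → [0,∞) be a nondecreasing right-continuous function with S(0) = 0, S(t) → ∞ as t → ∞, and such that for every T ≥ 0, S(T) = dT + Σ_{0 < u ≤ T} (S(u) − S(u−)), where the sum is over the (countably many) jump times u in (0,T]. Let R ⊂ [0,∞) be the closure of the range {S(t) : t ≥ 0}. Let φ : [0,∞) → [0,1) be a strictly increasing, locally absolutely continuous function with φ(0) = 0, φ(y) → 1 as y → ∞, and φ(y) = ∫₀^y φ'(u) du for all y, where φ' is its a.e. derivative. Then the Lebesgue measure of φ(R) equals d ∫₀^∞ φ'(S(t)) dt. -/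
open Filter MeasureTheory Real Set
open scoped Topology

/-!
A nondecreasing right-continuous `F` maps the diffuse part of its Stieltjes measure to Lebesgue
measure on its range: `(a, b]` has mass `F b - F a`, and the points of `(F a, F b]` missed by `F`
lie in the gaps `[F u-, F u]`, whose lengths are the masses of the atoms.

The decomposition of `S` into drift and jumps says that the diffuse part of its Stieltjes measure
is `d • λ`, so `S` maps `d • λ` to `λ` on the closure `R` of its range, which exceeds the range by
its supremum and countably many left limits at most. A nondecreasing primitive `φ` has no jumps
and Stieltjes measure `φ' • λ`, so `φ(R)` has measure `∫ φ'` over `R`.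
-/

/-- The points at which a right-continuous nondecreasing function does not jump. Their complement
is the set of atoms of its Stieltjes measure. -/
def continuityPoints (F : StieltjesFunction ℝ) : Set ℝ :=
  {u | Function.leftLim F u = F u}

section StieltjesImage

variable (F : StieltjesFunction ℝ) {a b y : ℝ} {A : Set ℝ}

lemma countable_compl_continuityPoints : (continuityPoints F)ᶜ.Countable :=
  F.countable_leftLim_ne

lemma measurableSet_continuityPoints : MeasurableSet (continuityPoints F) :=
  (countable_compl_continuityPoints F).measurableSet.of_compl

lemma measure_sdiff_continuityPoints (A : Set ℝ) :
    F.measure (A \ continuityPoints F) =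
      ∑' u : A, ENNReal.ofReal (F u - Function.leftLim F u) := by
  set jump : ℝ → ENNReal := fun u => ENNReal.ofReal (F u - Function.leftLim F u)
  have hcount : (A \ continuityPoints F).Countable :=
    (countable_compl_continuityPoints F).mono fun _ hu => hu.2
  calc F.measure (A \ continuityPoints F)
      = ∑' u : ↥(A \ continuityPoints F), jump u := by
        simpa [jump] using lintegral_countable (μ := F.measure) (f := fun _ => 1) hcount
    _ = ∑' u : A, jump u := by
        refine (tsum_setElem_eq_tsum_setElem_sdiff A (continuityPoints F) fun u hu => ?_).symm
        exact ENNReal.ofReal_of_nonpos (sub_nonpos.2 (Eq.ge hu))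

lemma measureReal_Ioc_inter_continuityPoints (hab : a ≤ b) :
    F.measure.real (Ioc a b ∩ continuityPoints F) =
      F b - F a - ∑' u : Ioc a b, (F u - Function.leftLim F u) := by
  have htotal : F.measure.real (Ioc a b) = F b - F a := by
    rw [measureReal_def, F.measure_Ioc, ENNReal.toReal_ofReal (sub_nonneg.2 (F.mono hab))]
  have hjumps : F.measure.real (Ioc a b \ continuityPoints F) =
      ∑' u : Ioc a b, (F u - Function.leftLim F u) := by
    rw [measureReal_def, measure_sdiff_continuityPoints,
      ENNReal.tsum_toReal_eq fun _ => ENNReal.ofReal_ne_top]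
    exact tsum_congr fun u =>
      ENNReal.toReal_ofReal (sub_nonneg.2 (F.mono.leftLim_le le_rfl))
  rw [← htotal, ← hjumps, eq_sub_iff_add_eq]
  exact measureReal_inter_add_sdiff (measurableSet_continuityPoints F) measure_Ioc_lt_top.ne

variable {F} in
lemma exists_leftLim_le_le (ha : F a < y) (hb : y ≤ F b) :
    ∃ u ∈ Ioc a b, Function.leftLim F u ≤ y ∧ y ≤ F u := by
  set passed : Set ℝ := {t | y ≤ F t}
  have hlower : ∀ t ∈ passed, a < t := fun t ht => F.mono.reflect_lt (ha.trans_le ht)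
  have hbdd : BddBelow passed := ⟨a, fun t ht => (hlower t ht).le⟩
  have hmem : y ≤ F (sInf passed) := by
    rw [← F.iInf_Ioi_eq]
    refine le_ciInf fun r => ?_
    obtain ⟨t, ht, htr⟩ := exists_lt_of_csInf_lt ⟨b, hb⟩ r.2
    exact ht.trans (F.mono htr.le)
  refine ⟨sInf passed, ⟨hlower _ hmem, csInf_le hbdd hb⟩, ?_, hmem⟩
  refine le_of_tendsto (F.mono.tendsto_leftLim _) ?_
  filter_upwards [self_mem_nhdsWithin] with t ht
  exact (not_le.1 fun hyt : t ∈ passed => (csInf_le hbdd hyt).not_gt ht).le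

-- Stieltjes outer measure is the largest one charging `(a, b]` with at most `F b - F a`.
lemma volume_image_le_measure (A : Set ℝ) : volume (F '' A) ≤ F.measure A := by
  have hle : OuterMeasure.comap F volume.toOuterMeasure ≤ F.outer := by
    refine OuterMeasure.le_ofFunction.2 fun s => ?_
    rw [F.length_eq]
    refine le_iInf₂ fun a b => le_iInf fun hs => ?_
    have himage : F '' s ⊆ Icc (F a) (F b) := by
      rintro _ ⟨t, ht, rfl⟩
      obtain ⟨hat, htb⟩ := hs ⟨ht, not_isBot t⟩
      exact ⟨F.mono hat.le, F.mono htb⟩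
    exact (measure_mono himage).trans_eq Real.volume_Icc
  rw [StieltjesFunction.measure]
  exact hle A

lemma volume_image_le_measure_inter (A : Set ℝ) :
    volume (F '' A) ≤ F.measure (A ∩ continuityPoints F) := by
  have hjumps : volume (F '' (A \ continuityPoints F)) = 0 :=
    (((countable_compl_continuityPoints F).mono fun _ hu => hu.2).image F).measure_zero _
  calc volume (F '' A)
      ≤ volume (F '' (A ∩ continuityPoints F)) + volume (F '' (A \ continuityPoints F)) := by
        conv_lhs => rw [← inter_union_sdiff A (continuityPoints F), image_union]
        exact measure_union_le _ _
    _ ≤ F.measure (A ∩ continuityPoints F) := by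
        rw [hjumps, add_zero]
        exact volume_image_le_measure F _

lemma measure_Ioc_inter_le_volume_image (a b : ℝ) :
    F.measure (Ioc a b ∩ continuityPoints F) ≤ volume (F '' Ioc a b) := by
  set jumps := Ioc a b \ continuityPoints F
  have hcount : jumps.Countable :=
    (countable_compl_continuityPoints F).mono fun _ hu => hu.2
  have hcover : Ioc (F a) (F b) ⊆
      F '' Ioc a b ∪ ⋃ u ∈ jumps, Icc (Function.leftLim F u) (F u) := by
    rintro y ⟨hay, hyb⟩
    obtain ⟨u, hu, hleft, hright⟩ := exists_leftLim_le_le hay hyb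
    by_cases hcont : u ∈ continuityPoints F
    · exact Or.inl ⟨u, hu, le_antisymm (hcont.symm.trans_le hleft) hright⟩
    · exact Or.inr (mem_biUnion ⟨hu, hcont⟩ ⟨hleft, hright⟩)
  have hjumps : volume (⋃ u ∈ jumps, Icc (Function.leftLim F u) (F u)) ≤ F.measure jumps := by
    refine (measure_biUnion_le volume hcount _).trans_eq ?_
    simpa using (lintegral_countable (μ := F.measure) (f := fun _ => 1) hcount).symm
  have hfinite : F.measure jumps ≠ ⊤ :=
    measure_ne_top_of_subset sdiff_subset measure_Ioc_lt_top.ne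
  refine ENNReal.le_of_add_le_add_right hfinite ?_
  calc F.measure (Ioc a b ∩ continuityPoints F) + F.measure jumps
      = volume (Ioc (F a) (F b)) := by
        rw [measure_inter_add_sdiff _ (measurableSet_continuityPoints F), F.measure_Ioc,
          Real.volume_Ioc]
    _ ≤ volume (F '' Ioc a b) + F.measure jumps :=
        (measure_mono hcover).trans ((measure_union_le _ _).trans (by gcongr))

lemma measure_inter_le_volume_image_of_subset_Ioc (hA : MeasurableSet A) (hsub : A ⊆ Ioc a b) :
    F.measure (A ∩ continuityPoints F) ≤ volume (F '' A) := by
  set rest := (Ioc a b \ A) ∩ continuityPoints F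
  have hfinite : F.measure rest ≠ ⊤ :=
    measure_ne_top_of_subset (inter_subset_left.trans sdiff_subset) measure_Ioc_lt_top.ne
  refine ENNReal.le_of_add_le_add_right hfinite ?_
  calc F.measure (A ∩ continuityPoints F) + F.measure rest
      = F.measure (Ioc a b ∩ continuityPoints F) := by
        rw [← measure_inter_add_sdiff (Ioc a b ∩ continuityPoints F) hA, inter_right_comm,
          inter_eq_right.2 hsub, inter_sdiff_right_comm]
    _ ≤ volume (F '' Ioc a b) := measure_Ioc_inter_le_volume_image F a b
    _ ≤ volume (F '' A) + volume (F '' (Ioc a b \ A)) := by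
        conv_lhs => rw [← union_sdiff_cancel hsub, image_union]
        exact measure_union_le _ _
    _ ≤ volume (F '' A) + F.measure rest := by
        exact add_le_add le_rfl (volume_image_le_measure_inter F (Ioc a b \ A))

theorem volume_image_eq_measure_inter_continuityPoints (hA : MeasurableSet A) :
    volume (F '' A) = F.measure (A ∩ continuityPoints F) := by
  refine le_antisymm (volume_image_le_measure_inter F A) ?_
  rw [(hA.inter (measurableSet_continuityPoints F)).measure_eq_iSup_isCompact]
  refine iSup₂_le fun K hKA => iSup_le fun hK => ?_
  obtain ⟨a, ha⟩ := hK.bddBelow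
  obtain ⟨b, hb⟩ := hK.bddAbove
  have hsub : K ⊆ Ioc (a - 1) b := fun t ht => ⟨(sub_one_lt a).trans_le (ha ht), hb ht⟩
  calc F.measure K
      = F.measure (K ∩ continuityPoints F) := by
        rw [inter_eq_left.2 (hKA.trans inter_subset_right)]
    _ ≤ volume (F '' K) :=
        measure_inter_le_volume_image_of_subset_Ioc F hK.measurableSet hsub
    _ ≤ volume (F '' A) := measure_mono (image_mono (hKA.trans inter_subset_left))

theorem map_restrict_inter_continuityPoints (hA : MeasurableSet A) :
    (F.measure.restrict (A ∩ continuityPoints F)).map F = volume.restrict (F '' A) := by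
  have hmeas : Measurable F := F.mono.measurable
  ext s hs
  rw [Measure.map_apply hmeas hs, Measure.restrict_apply (hmeas hs), Measure.restrict_apply hs,
    ← inter_assoc, ← volume_image_eq_measure_inter_continuityPoints F ((hmeas hs).inter hA),
    inter_comm (F ⁻¹' s), image_inter_preimage, inter_comm]

lemma countable_closure_range_sdiff : (closure (range F) \ range F).Countable := by
  have hsup : {y | IsLUB (range F) y}.Countable :=
    Set.Subsingleton.countable fun _ hx _ hy => IsLeast.unique hx hy
  have hinf : {y | IsGLB (range F) y}.Countable :=
    Set.Subsingleton.countable fun _ hx _ hy => IsGreatest.unique hx hy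
  have hleft := (countable_compl_continuityPoints F).image (Function.leftLim F)
  refine ((hsup.union hinf).union hleft).mono ?_
  rintro y ⟨hy, hy_range⟩
  by_cases hupper : y ∈ upperBounds (range F)
  · exact Or.inl (Or.inl (isLUB_of_mem_closure hupper hy))
  by_cases hlower : y ∈ lowerBounds (range F)
  · exact Or.inl (Or.inr (isGLB_of_mem_closure hlower hy))
  obtain ⟨b, hb⟩ : ∃ b, y < F b := by simpa [upperBounds] using hupper
  obtain ⟨a, ha⟩ : ∃ a, F a < y := by simpa [lowerBounds] using hlower
  obtain ⟨u, -, hleft_le, hle⟩ := exists_leftLim_le_le ha hb.le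
  have hlt : y < F u := hle.lt_of_ne fun h => hy_range ⟨u, h.symm⟩
  have heq : Function.leftLim F u = y := by
    by_contra hne
    obtain ⟨_, ⟨hgt, hlt'⟩, t, rfl⟩ :=
      mem_closure_iff.1 hy _ isOpen_Ioo ⟨hleft_le.lt_of_ne hne, hlt⟩
    exact hgt.not_ge (F.mono.le_leftLim (F.mono.reflect_lt hlt'))
  exact Or.inr ⟨u, fun h => (heq.symm.trans h).not_lt hlt, heq⟩

lemma ae_eq_closure_image_Ici {c : ℝ} (hrange : range F = F '' Ici c) :
    (F '' Ioi c : Set ℝ) =ᵐ[volume] closure (F '' Ici c) := by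
  have hsub : F '' Ioi c ⊆ closure (F '' Ici c) :=
    (image_mono Ioi_subset_Ici_self).trans subset_closure
  have hdiff : (closure (F '' Ici c) \ F '' Ioi c).Countable := by
    refine ((countable_closure_range_sdiff F).union (countable_singleton (F c))).mono ?_
    rw [hrange, ← Ioi_insert, image_insert_eq]
    rintro y ⟨hy, hy_image⟩
    by_cases hyc : y = F c
    · exact Or.inr hyc
    · exact Or.inl ⟨hy, fun h => h.elim hyc hy_image⟩
  exact hsub.eventuallyLE.antisymm (ae_le_set.2 (hdiff.measure_zero volume))

end StieltjesImage

section Drift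

variable {F : StieltjesFunction ℝ} {d : ℝ}
  (hF : ∀ T : ℝ, 0 ≤ T →
    F T = d * T + ∑' u : Ioc (0 : ℝ) T, (F u - Function.leftLim F u))

include hF

lemma measureReal_Ioc_zero_inter_continuityPoints {T : ℝ} (hT : 0 ≤ T) :
    F.measure.real (Ioc 0 T ∩ continuityPoints F) = d * T := by
  have hF0 : F 0 = 0 := by simpa using hF 0 le_rfl
  rw [measureReal_Ioc_inter_continuityPoints F hT, hF0]
  linarith [hF T hT]

lemma drift_nonneg : 0 ≤ d := by
  rw [← mul_one d, ← measureReal_Ioc_zero_inter_continuityPoints hF zero_le_one]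
  exact measureReal_nonneg

lemma measure_Ioc_inter_continuityPoints {a b : ℝ} (ha : 0 ≤ a) (hab : a ≤ b) :
    F.measure (Ioc a b ∩ continuityPoints F) = ENNReal.ofReal d * volume (Ioc a b) := by
  have hfinite : F.measure (Ioc a b ∩ continuityPoints F) ≠ ⊤ :=
    measure_ne_top_of_subset inter_subset_left measure_Ioc_lt_top.ne
  have hsplit : F.measure.real (Ioc 0 b ∩ continuityPoints F) =
      F.measure.real (Ioc 0 a ∩ continuityPoints F) +
        F.measure.real (Ioc a b ∩ continuityPoints F) := by
    rw [← Ioc_union_Ioc_eq_Ioc ha hab, union_inter_distrib_right]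
    refine measureReal_union ?_ (measurableSet_Ioc.inter (measurableSet_continuityPoints F))
      (measure_ne_top_of_subset inter_subset_left measure_Ioc_lt_top.ne) hfinite
    exact (Ioc_disjoint_Ioc_of_le le_rfl).mono inter_subset_left inter_subset_left
  rw [measureReal_Ioc_zero_inter_continuityPoints hF (ha.trans hab),
    measureReal_Ioc_zero_inter_continuityPoints hF ha] at hsplit
  rw [Real.volume_Ioc, ← ENNReal.ofReal_mul (drift_nonneg hF), ← ofReal_measureReal hfinite]
  congr 1
  linarith

lemma measure_restrict_Ioi_inter_continuityPoints :
    F.measure.restrict (Ioi 0 ∩ continuityPoints F) =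
      ENNReal.ofReal d • volume.restrict (Ioi 0) := by
  refine Measure.ext_of_Ioc _ _ fun a b _ => ?_
  rw [Measure.restrict_apply measurableSet_Ioc, Measure.smul_apply, smul_eq_mul,
    Measure.restrict_apply measurableSet_Ioc, ← inter_assoc, Ioc_inter_Ioi]
  rcases le_or_gt (a ⊔ 0) b with hab | hba
  · exact measure_Ioc_inter_continuityPoints hF le_sup_right hab
  · simp [Ioc_eq_empty hba.not_gt]

theorem map_smul_restrict_Ioi_eq_restrict_image :
    (ENNReal.ofReal d • volume.restrict (Ioi 0)).map F = volume.restrict (F '' Ioi 0) := by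
  rw [← measure_restrict_Ioi_inter_continuityPoints hF,
    map_restrict_inter_continuityPoints F measurableSet_Ioi]

end Drift

section Primitive

variable {f : ℝ → ℝ} (hf : LocallyIntegrable f)

include hf

lemma ae_nonneg_of_monotoneOn_primitive {s : Set ℝ} (hs : UniqueDiffOn ℝ s) {c : ℝ}
    (hmono : MonotoneOn (fun y => ∫ x in c..y, f x) s) : ∀ᵐ x, x ∈ s → 0 ≤ f x := by
  filter_upwards [LocallyIntegrable.ae_hasDerivAt_integral hf] with x hderiv hx
  exact (hderiv c).hasDerivWithinAt.nonneg_of_monotoneOn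
    (uniqueDiffWithinAt_iff_accPt.1 (hs x hx)) hmono

theorem volume_image_primitive (hpos : 0 ≤ᵐ[volume] f) (c : ℝ) {A : Set ℝ}
    (hA : MeasurableSet A) :
    volume ((fun y => ∫ x in c..y, f x) '' A) = ∫⁻ x in A, ENNReal.ofReal (f x) := by
  have hinteg : ∀ a b : ℝ, IntervalIntegrable f volume a b := fun a b =>
    (hf.integrableOn_isCompact isCompact_uIcc).intervalIntegrable
  have hsub : ∀ a b : ℝ, (∫ x in c..b, f x) - ∫ x in c..a, f x = ∫ x in a..b, f x := fun a b =>
    intervalIntegral.integral_interval_sub_left (hinteg c b) (hinteg c a)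
  have hcont : Continuous fun y => ∫ x in c..y, f x :=
    intervalIntegral.continuous_primitive hinteg c
  let Φ : StieltjesFunction ℝ :=
    { toFun := fun y => ∫ x in c..y, f x
      mono' := fun a b hab => sub_nonneg.1 <| by
        rw [hsub]
        exact intervalIntegral.integral_nonneg_of_ae hab hpos
      right_continuous' := fun x => hcont.continuousWithinAt }
  have hΦ_cont : continuityPoints Φ = univ :=
    eq_univ_of_forall fun u => hcont.continuousAt.continuousWithinAt.leftLim_eq
  have hΦ_measure : Φ.measure = volume.withDensity fun x => ENNReal.ofReal (f x) := by
    refine Measure.ext_of_Ioc _ _ fun a b hab => ?_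
    rw [Φ.measure_Ioc, withDensity_apply _ measurableSet_Ioc,
      ← ofReal_integral_eq_lintegral_ofReal (hinteg a b).1 (ae_restrict_of_ae hpos),
      ← intervalIntegral.integral_of_le hab.le]
    exact congrArg ENNReal.ofReal (hsub a b)
  change volume (Φ '' A) = _
  rw [volume_image_eq_measure_inter_continuityPoints Φ hA, hΦ_cont, inter_univ, hΦ_measure,
    withDensity_apply _ hA]

end Primitive

section HalfLine

variable {φ φ' : ℝ → ℝ} {a : ℝ}

lemma intervalIntegral_indicator_Ici {y : ℝ} (hy : a ≤ y) :
    ∫ x in a..y, (Ici a).indicator φ' x = ∫ x in Ioc a y, φ' x := by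
  rw [intervalIntegral.integral_of_le hy]
  exact setIntegral_congr_fun measurableSet_Ioc fun x hx => indicator_of_mem hx.1.le φ'

lemma locallyIntegrable_indicator_Ici (hinteg : ∀ y, a ≤ y → IntegrableOn φ' (Ioc a y)) :
    LocallyIntegrable ((Ici a).indicator φ') := by
  refine locallyIntegrable_iff.2 fun K hK => ?_
  obtain ⟨b, hb⟩ := hK.bddAbove
  rw [IntegrableOn, integrable_indicator_iff measurableSet_Ici, IntegrableOn,
    Measure.restrict_restrict measurableSet_Ici]
  have hIcc : IntegrableOn φ' (Icc a (max a b)) :=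
    integrableOn_Icc_iff_integrableOn_Ioc enorm_ne_top |>.2 (hinteg _ (le_max_left a b))
  exact hIcc.mono_set fun x hx => ⟨hx.1, (hb hx.2).trans (le_max_right a b)⟩

section MonotonePrimitive

variable (hmono : MonotoneOn φ (Ici a)) (hinteg : ∀ y, a ≤ y → IntegrableOn φ' (Ioc a y))
  (hprim : ∀ y, a ≤ y → φ y = ∫ u in Ioc a y, φ' u)

include hmono hinteg hprim

lemma ae_nonneg_indicator_Ici_of_monotoneOn : 0 ≤ᵐ[volume] (Ici a).indicator φ' := by
  have hmono' : MonotoneOn (fun y => ∫ x in a..y, (Ici a).indicator φ' x) (Ici a) :=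
    hmono.congr fun y hy => (hprim y hy).trans (intervalIntegral_indicator_Ici hy).symm
  filter_upwards [ae_nonneg_of_monotoneOn_primitive (locallyIntegrable_indicator_Ici hinteg)
    (uniqueDiffOn_Ici a) hmono'] with x hx
  by_cases hxa : x ∈ Ici a
  · exact hx hxa
  · exact (indicator_of_notMem hxa φ').ge

lemma ae_restrict_Ici_nonneg_of_monotoneOn : ∀ᵐ x ∂volume.restrict (Ici a), 0 ≤ φ' x := by
  rw [ae_restrict_iff' measurableSet_Ici]
  filter_upwards [ae_nonneg_indicator_Ici_of_monotoneOn hmono hinteg hprim] with x hx hxa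
  simpa only [Pi.zero_apply, indicator_of_mem hxa] using hx

lemma integrableOn_Ici_of_bddAbove (hbdd : BddAbove (φ '' Ici a)) : IntegrableOn φ' (Ici a) := by
  obtain ⟨M, hM⟩ := hbdd
  rw [integrableOn_Ici_iff_integrableOn_Ioi]
  refine integrableOn_Ioi_of_intervalIntegral_norm_bounded M a (b := fun y => max a y)
    (fun y => hinteg _ (le_max_left a y)) (tendsto_atTop_mono (le_max_right a) tendsto_id)
    (Eventually.of_forall fun y => ?_)
  have hnorm : ∫ x in a..max a y, ‖φ' x‖ = φ (max a y) := by
    rw [intervalIntegral.integral_of_le (le_max_left a y), hprim _ (le_max_left a y)]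
    refine integral_congr_ae ?_
    filter_upwards [ae_restrict_of_ae_restrict_of_subset
      (Ioc_subset_Icc_self.trans Icc_subset_Ici_self)
      (ae_restrict_Ici_nonneg_of_monotoneOn hmono hinteg hprim)]
      with x hx using Real.norm_of_nonneg hx
  exact hnorm.trans_le (hM ⟨_, le_max_left a y, rfl⟩)

lemma volume_image_eq_setLIntegral {A : Set ℝ} (hA : MeasurableSet A) (hAa : A ⊆ Ici a) :
    volume (φ '' A) = ∫⁻ x in A, ENNReal.ofReal (φ' x) := by
  have himage : φ '' A = (fun y => ∫ x in a..y, (Ici a).indicator φ' x) '' A :=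
    image_congr fun y hy =>
      (hprim y (hAa hy)).trans (intervalIntegral_indicator_Ici (hAa hy)).symm
  rw [himage, volume_image_primitive (locallyIntegrable_indicator_Ici hinteg)
    (ae_nonneg_indicator_Ici_of_monotoneOn hmono hinteg hprim) a hA]
  exact setLIntegral_congr_fun hA fun x hx => by rw [indicator_of_mem (hAa hx)]

theorem volume_image_eq_ofReal_setIntegral (hbdd : BddAbove (φ '' Ici a)) {A : Set ℝ}
    (hA : MeasurableSet A) (hAa : A ⊆ Ici a) :
    volume (φ '' A) = ENNReal.ofReal (∫ x in A, φ' x) := by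
  rw [volume_image_eq_setLIntegral hmono hinteg hprim hA hAa, ofReal_integral_eq_lintegral_ofReal
    ((integrableOn_Ici_of_bddAbove hmono hinteg hprim hbdd).mono_set hAa)
    (ae_restrict_of_ae_restrict_of_subset hAa
      (ae_restrict_Ici_nonneg_of_monotoneOn hmono hinteg hprim))]

end MonotonePrimitive

lemma exists_stieltjesFunction_extension {S : ℝ → ℝ} (hmono : MonotoneOn S (Ici a))
    (hcont : ∀ u, a ≤ u → ContinuousWithinAt S (Ici u) u) :
    ∃ F : StieltjesFunction ℝ, EqOn F S (Ici a) ∧ range F = F '' Ici a ∧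
      ∀ u, a < u → Function.leftLim F u = Function.leftLim S u := by
  have hF_mono : Monotone fun t => S (max a t) := fun s t hst =>
    hmono (le_max_left a s) (le_max_left a t) (max_le_max_left a hst)
  have hF_eq : EqOn (fun t => S (max a t)) S (Ici a) := fun t ht =>
    congrArg S (max_eq_right ht)
  refine ⟨⟨fun t => S (max a t), hF_mono, fun t => ?_⟩, hF_eq, ?_, fun u hu => ?_⟩
  · exact (hcont _ (le_max_left a t)).comp (by fun_prop)
      fun s hs => max_le_max_left a hs
  · refine (image_subset_range _ _).antisymm' ?_
    rintro _ ⟨t, rfl⟩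
    exact ⟨max a t, le_max_left a t, by simp⟩
  · refine (leftLim_eq_of_tendsto ((hF_mono.tendsto_leftLim u).congr' ?_)).symm
    filter_upwards [Ioo_mem_nhdsLT hu] with t ht using hF_eq ht.1.le

end HalfLine

section DriftOnHalfLine

variable {d : ℝ} {S : ℝ → ℝ} (hmono : MonotoneOn S (Ici 0))
  (hcont : ∀ u, 0 ≤ u → ContinuousWithinAt S (Ici u) u)
  (hjump : ∀ T : ℝ, 0 ≤ T → S T = d * T + ∑' u : Ioc (0 : ℝ) T, (S u - Function.leftLim S u))

include hmono hcont hjump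

lemma exists_stieltjesFunction_extension_drift :
    ∃ F : StieltjesFunction ℝ, EqOn F S (Ici 0) ∧ range F = F '' Ici 0 ∧ ∀ T : ℝ, 0 ≤ T →
      F T = d * T + ∑' u : Ioc (0 : ℝ) T, (F u - Function.leftLim F u) := by
  obtain ⟨F, hFS, hrange, hleft⟩ := exists_stieltjesFunction_extension hmono hcont
  refine ⟨F, hFS, hrange, fun T hT => ?_⟩
  rw [hFS hT, hjump T hT]
  exact congrArg (d * T + ·) (tsum_congr fun u => by rw [hFS u.2.1.le, hleft u u.2.1])

theorem map_smul_restrict_Ioi_eq_restrict_closure :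
    (ENNReal.ofReal d • volume.restrict (Ioi 0)).map S =
      volume.restrict (closure (S '' Ici 0)) := by
  obtain ⟨F, hFS, hrange, hF⟩ := exists_stieltjesFunction_extension_drift hmono hcont hjump
  have hae : S =ᵐ[ENNReal.ofReal d • volume.restrict (Ioi 0)] F := by
    refine Measure.ae_smul_measure ?_ _
    filter_upwards [ae_restrict_mem measurableSet_Ioi] with t ht
      using (hFS (Ioi_subset_Ici_self ht)).symm
  rw [Measure.map_congr hae, map_smul_restrict_Ioi_eq_restrict_image hF, ← hFS.image_eq,
    Measure.restrict_congr_set (ae_eq_closure_image_Ici F hrange)]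

theorem setIntegral_closure_image_Ici {E : Type*} [NormedAddCommGroup E] [NormedSpace ℝ E]
    {g : ℝ → E} (hg : AEStronglyMeasurable g (volume.restrict (closure (S '' Ici 0)))) :
    ∫ y in closure (S '' Ici 0), g y = d • ∫ t in Ioi 0, g (S t) := by
  obtain ⟨F, -, -, hF⟩ := exists_stieltjesFunction_extension_drift hmono hcont hjump
  have hS : AEMeasurable S (ENNReal.ofReal d • volume.restrict (Ioi 0)) :=
    (aemeasurable_restrict_of_monotoneOn measurableSet_Ioi
      (hmono.mono Ioi_subset_Ici_self)).smul_measure _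
  rw [← map_smul_restrict_Ioi_eq_restrict_closure hmono hcont hjump] at hg ⊢
  rw [integral_map hS hg, integral_smul_measure, ENNReal.toReal_ofReal (drift_nonneg hF)]

end DriftOnHalfLine

lemma bddAbove_image_Ici_of_tendsto {g : ℝ → ℝ} {a l : ℝ} (hmono : MonotoneOn g (Ici a))
    (hlim : Tendsto g atTop (𝓝 l)) : BddAbove (g '' Ici a) := by
  refine ⟨l, ?_⟩
  rintro _ ⟨y, hy, rfl⟩
  refine ge_of_tendsto hlim ?_
  filter_upwards [eventually_ge_atTop y] with t ht using hmono hy (le_trans hy ht) ht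

theorem lebesgue_measure_transformed_range_general (d : ℝ)
    (S : ℝ → ℝ) (hSmono : MonotoneOn S (Set.Ici 0))
    (hScadlag : ∀ u : ℝ, 0 ≤ u → ContinuousWithinAt S (Set.Ici u) u)
    (hjump : ∀ T : ℝ, 0 ≤ T →
      S T = d * T + ∑' u : Set.Ioc (0 : ℝ) T, (S u.1 - Function.leftLim S u.1))
    (φ φ' : ℝ → ℝ)
    (hφmono : MonotoneOn φ (Set.Ici 0))
    (hφbdd : BddAbove (φ '' Set.Ici 0))
    (hφ'int : ∀ y : ℝ, 0 ≤ y → IntegrableOn φ' (Set.Ioc 0 y))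
    (hφac : ∀ y : ℝ, 0 ≤ y → φ y = ∫ u in Set.Ioc (0 : ℝ) y, φ' u) :
    volume (φ '' closure (S '' Set.Ici 0)) =
      ENNReal.ofReal (d * ∫ t in Set.Ioi (0 : ℝ), φ' (S t)) := by
  have hS0 : S 0 = 0 := by simpa using hjump 0 le_rfl
  have hsub : closure (S '' Ici 0) ⊆ Ici 0 :=
    closure_minimal (image_subset_iff.2 fun t ht =>
      hS0.symm.trans_le (hSmono self_mem_Ici ht ht)) isClosed_Ici
  have hφ'meas : AEStronglyMeasurable φ' (volume.restrict (closure (S '' Ici 0))) :=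
    ((integrableOn_Ici_of_bddAbove hφmono hφ'int hφac hφbdd).mono_set hsub).1
  rw [volume_image_eq_ofReal_setIntegral hφmono hφ'int hφac hφbdd
      isClosed_closure.measurableSet hsub,
    setIntegral_closure_image_Ici hSmono hScadlag hjump hφ'meas, smul_eq_mul]

/-- If `S` is a nondecreasing right-continuous function on `[0,∞)` with `S 0 = 0`,
`S(t) → ∞`, and pure-jump-plus-drift decomposition
`S(T) = dT + ∑_{0<u≤T} (S(u)-S(u-))` for a drift `d > 0`, `R` is the closure of the
range of `S`, and `φ : [0,∞) → [0,1)` is a strictly increasing locally absolutely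
continuous function with `φ(0)=0`, `φ(y)→1` and `φ(y) = ∫₀^y φ'`, then the Lebesgue
measure of `φ(R)` equals `d ∫₀^∞ φ'(S t) dt`. -/
theorem lebesgue_measure_transformed_range (d : ℝ) (hd : 0 < d)
    (S : ℝ → ℝ) (hSmono : MonotoneOn S (Set.Ici 0)) (hS0 : S 0 = 0)
    (hScadlag : ∀ u : ℝ, 0 ≤ u → ContinuousWithinAt S (Set.Ici u) u)
    (hSinfty : Tendsto S atTop atTop)
    (hjump : ∀ T : ℝ, 0 ≤ T →
      S T = d * T + ∑' u : Set.Ioc (0 : ℝ) T, (S u.1 - Function.leftLim S u.1))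
    (φ φ' : ℝ → ℝ)
    (hφmono : StrictMonoOn φ (Set.Ici 0))
    (hφ0 : φ 0 = 0)
    (hφ1 : Tendsto φ atTop (nhds 1))
    (hφ'int : ∀ y : ℝ, 0 ≤ y → IntegrableOn φ' (Set.Ioc 0 y))
    (hφac : ∀ y : ℝ, 0 ≤ y → φ y = ∫ u in Set.Ioc (0 : ℝ) y, φ' u) :
    volume (φ '' closure (S '' Set.Ici 0)) =
      ENNReal.ofReal (d * ∫ t in Set.Ioi (0 : ℝ), φ' (S t)) := by
  exact lebesgue_measure_transformed_range_general d S hSmono hScadlag hjump φ φ'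
    hφmono.monotoneOn (bddAbove_image_Ici_of_tendsto hφmono.monotoneOn hφ1) hφ'int hφac
end

section
/- Let (m_k)_{k≥0} and (Φ_k)_{k≥0} be sequences of real numbers with m_0 = 1, Φ_0 = 0, and Φ_k ≠ 0 for all k ≥ 1. If for every integer k ≥ 1 the recursion m_k Φ_k = Σ_{j=0}^{k−1} (k!/j!) (1 − Φ_j) m_j holds, then for every k ≥ 1, m_k = k! / (Φ_1 Φ_2 ⋯ Φ_k). -/
/-!
In terms of `u k = m k / k!` the recursion reads `u k * Φ k = ∑ j < k, u j * (1 - Φ j)`. Its right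
hand side grows by `u k * (1 - Φ k) = u k - u k * Φ k` from `k` to `k + 1`, which leaves
`u (k + 1) * Φ (k + 1) = u k`, so that `u k * (Φ 1 ⋯ Φ k)` does not depend on `k ≥ 1`. Its value at
`k = 1` is `u 0 * (1 - Φ 0)`, by the recursion itself.
-/

theorem succ_mul_succ_eq_of_mul_eq_sum_range {R : Type*} [Ring R] {u φ : ℕ → R} {k : ℕ}
    (hk : u k * φ k = ∑ j ∈ Finset.range k, u j * (1 - φ j))
    (hk_succ : u (k + 1) * φ (k + 1) = ∑ j ∈ Finset.range (k + 1), u j * (1 - φ j)) :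
    u (k + 1) * φ (k + 1) = u k := by
  rw [hk_succ, Finset.sum_range_succ, ← hk, mul_sub, mul_one, add_sub_cancel]

theorem mul_prod_Icc_one_eq_of_succ_mul_succ_eq {M : Type*} [CommMonoid M] {u φ : ℕ → M}
    (h : ∀ k, 1 ≤ k → u (k + 1) * φ (k + 1) = u k) {k : ℕ} (hk : 1 ≤ k) :
    u k * ∏ j ∈ Finset.Icc 1 k, φ j = u 1 * φ 1 := by
  induction k, hk using Nat.le_induction with
  | base => rw [Finset.Icc_self, Finset.prod_singleton]
  | succ k hk ih =>
    calc u (k + 1) * ∏ j ∈ Finset.Icc 1 (k + 1), φ j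
        = u (k + 1) * φ (k + 1) * ∏ j ∈ Finset.Icc 1 k, φ j := by
          rw [Finset.prod_Icc_succ_top (Nat.le_add_left 1 k), mul_assoc, mul_comm (φ (k + 1))]
      _ = u 1 * φ 1 := by rw [h k hk, ih]

theorem mul_prod_Icc_one_eq_of_mul_eq_sum_range {R : Type*} [CommRing R] {u φ : ℕ → R}
    (h : ∀ k, 1 ≤ k → u k * φ k = ∑ j ∈ Finset.range k, u j * (1 - φ j))
    {k : ℕ} (hk : 1 ≤ k) :
    u k * ∏ j ∈ Finset.Icc 1 k, φ j = u 0 * (1 - φ 0) := by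
  have h_succ (i : ℕ) (hi : 1 ≤ i) : u (i + 1) * φ (i + 1) = u i :=
    succ_mul_succ_eq_of_mul_eq_sum_range (h i hi) (h (i + 1) (Nat.le_add_left 1 i))
  rw [mul_prod_Icc_one_eq_of_succ_mul_succ_eq h_succ hk, h 1 le_rfl, Finset.sum_range_one]

theorem div_factorial_mul_eq_sum_range {K : Type*} [Field K] [CharZero K] {m Φ : ℕ → K} {k : ℕ}
    (h : m k * Φ k = ∑ j ∈ Finset.range k,
      ((Nat.factorial k : K) / (Nat.factorial j : K)) * (1 - Φ j) * m j) :
    m k / (Nat.factorial k : K) * Φ k =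
      ∑ j ∈ Finset.range k, m j / (Nat.factorial j : K) * (1 - Φ j) := by
  have hk : (Nat.factorial k : K) ≠ 0 := Nat.cast_ne_zero.mpr k.factorial_ne_zero
  rw [div_mul_eq_mul_div, h, div_eq_iff hk, Finset.sum_mul]
  exact Finset.sum_congr rfl fun j _ => by ring

theorem moment_recursion_solution_general {K : Type*} [Field K] [CharZero K] (m Φ : ℕ → K)
    (hrec : ∀ k : ℕ, 1 ≤ k →
      m k * Φ k = ∑ j ∈ Finset.range k,
        ((Nat.factorial k : K) / (Nat.factorial j : K)) * (1 - Φ j) * m j)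
    (k : ℕ) (hk : 1 ≤ k) :
    m k * ∏ j ∈ Finset.Icc 1 k, Φ j = (Nat.factorial k : K) * (m 0 * (1 - Φ 0)) := by
  have hk_factorial : (Nat.factorial k : K) ≠ 0 := Nat.cast_ne_zero.mpr k.factorial_ne_zero
  have h_prod : m k / (Nat.factorial k : K) * ∏ j ∈ Finset.Icc 1 k, Φ j = m 0 * (1 - Φ 0) := by
    simpa using mul_prod_Icc_one_eq_of_mul_eq_sum_range
      (fun i hi => div_factorial_mul_eq_sum_range (hrec i hi)) hk
  rw [← h_prod, ← mul_assoc, mul_div_cancel₀ _ hk_factorial]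

/-- If `m 0 = 1`, `Φ 0 = 0`, `Φ k ≠ 0` for `k ≥ 1`, and the recursion
`m k * Φ k = ∑_{j=0}^{k-1} (k!/j!) (1 - Φ j) m j` holds for every `k ≥ 1`,
then `m k = k! / (Φ 1 ⋯ Φ k)` for every `k ≥ 1`. -/
theorem moment_recursion_solution (m Φ : ℕ → ℝ) (hm0 : m 0 = 1) (hΦ0 : Φ 0 = 0)
    (hΦ : ∀ k : ℕ, 1 ≤ k → Φ k ≠ 0)
    (hrec : ∀ k : ℕ, 1 ≤ k →
      m k * Φ k = ∑ j ∈ Finset.range k,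
        ((Nat.factorial k : ℝ) / (Nat.factorial j : ℝ)) * (1 - Φ j) * m j) :
    ∀ k : ℕ, 1 ≤ k → m k = (Nat.factorial k : ℝ) / ∏ j ∈ Finset.Icc 1 k, Φ j := by
  intro k hk
  have h_prod : ∏ j ∈ Finset.Icc 1 k, Φ j ≠ 0 :=
    Finset.prod_ne_zero_iff.mpr fun j hj => hΦ j (Finset.mem_Icc.mp hj).1
  rw [eq_div_iff h_prod]
  simpa [hm0, hΦ0] using moment_recursion_solution_general m Φ hrec k hk
end

section
/- Let 0 < α < 1 and θ > 0, and let ν̃ be the measure on (0,1) with Lebesgue density f(x) = α x^{−α−1}(1−x)^θ + θ x^{−α}(1−x)^{θ−1} (so that ν̃([x,1)) = x^{−α}(1−x)^θ for 0 < x < 1). Then for every real s > 0, ∫₀¹ (1 − (1−x)^s) f(x) dx = s Γ(1−α) Γ(s+θ) / Γ(s + 1 − α + θ), where Γ is the Gamma function. -/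
open Real MeasureTheory

/-!
The density `f` is minus the derivative of the tail `x^{-α} (1-x)^θ`, so integrating
`1 - (1-x)^s` against `f` by parts leaves `s ∫₀¹ x^{-α} (1-x)^{s+θ-1} dx`, a Beta integral.
The integrand is absolutely integrable and the boundary term vanishes because `1 - (1-x)^s`
vanishes to first order at `0`, which a form of Bernoulli's inequality makes quantitative.
-/

open Set Filter Topology

theorem integral_Ioo_mul_deriv_eq_deriv_mul {A : Type*} [NormedRing A] [NormedAlgebra ℝ A]
    [CompleteSpace A] {u v u' v' : ℝ → A} {a b : ℝ} {l r : A} (hab : a < b)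
    (hu : ∀ x ∈ Ioo a b, HasDerivAt u (u' x) x) (hv : ∀ x ∈ Ioo a b, HasDerivAt v (v' x) x)
    (huv' : IntegrableOn (fun x ↦ u x * v' x) (Ioo a b))
    (hu'v : IntegrableOn (fun x ↦ u' x * v x) (Ioo a b))
    (ha : Tendsto (fun x ↦ u x * v x) (𝓝[>] a) (𝓝 l))
    (hb : Tendsto (fun x ↦ u x * v x) (𝓝[<] b) (𝓝 r)) :
    ∫ x in Ioo a b, u x * v' x = r - l - ∫ x in Ioo a b, u' x * v x := by
  rw [eq_sub_iff_add_eq', ← integral_add hu'v huv', ← integral_Ioc_eq_integral_Ioo,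
    ← intervalIntegral.integral_of_le hab.le]
  exact intervalIntegral.integral_eq_sub_of_hasDerivAt_of_tendsto hab
    (fun x hx ↦ (hu x hx).mul (hv x hx))
    ((intervalIntegrable_iff_integrableOn_Ioo_of_le hab.le).2 (hu'v.add huv')) ha hb

theorem one_sub_rpow_le_max_one_mul {y s : ℝ} (hy0 : 0 < y) (hy1 : y ≤ 1) :
    1 - y ^ s ≤ max 1 s * (1 - y) := by
  have bernoulli : 1 + max 1 s * (y - 1) ≤ (1 + (y - 1)) ^ max 1 s :=
    one_add_mul_self_le_rpow_one_add (by linarith) (le_max_left 1 s)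
  have rpow_le : y ^ max 1 s ≤ y ^ s :=
    rpow_le_rpow_of_exponent_ge hy0 hy1 (le_max_right 1 s)
  rw [add_sub_cancel] at bernoulli
  linarith

theorem abs_one_sub_rpow_le {y : ℝ} (hy0 : 0 < y) (hy1 : y ≤ 1) (s : ℝ) :
    |1 - y ^ s| ≤ max 1 |s| * (1 - y) * (1 + y ^ s) := by
  have hpow : 0 < y ^ s := rpow_pos_of_pos hy0 s
  have le_bound (t : ℝ) (ht : |t| = |s|) : 1 - y ^ t ≤ max 1 |s| * (1 - y) :=
    (one_sub_rpow_le_max_one_mul hy0 hy1).trans <|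
      mul_le_mul_of_nonneg_right (max_le_max_left 1 (ht ▸ le_abs_self t)) (sub_nonneg.2 hy1)
  have bound_nonneg : 0 ≤ max 1 |s| * (1 - y) := mul_nonneg (by positivity) (sub_nonneg.2 hy1)
  refine abs_le'.2 ⟨?_, ?_⟩
  · nlinarith [le_bound s rfl]
  · calc -(1 - y ^ s) = (1 - y ^ (-s)) * y ^ s := by
          rw [rpow_neg hy0.le, sub_mul, inv_mul_cancel₀ hpow.ne']; ring
      _ ≤ max 1 |s| * (1 - y) * y ^ s :=
          mul_le_mul_of_nonneg_right (le_bound (-s) (abs_neg s)) hpow.le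
      _ ≤ max 1 |s| * (1 - y) * (1 + y ^ s) := by nlinarith

/-- The unnormalised Beta density with exponents `a` and `b`, without the customary shift by `1`.
The tail `ν̃([x,1))` is `betaKernel (-α) θ x`. -/
noncomputable def betaKernel (a b x : ℝ) : ℝ :=
  x ^ a * (1 - x) ^ b

section BetaKernel

variable {a b s x : ℝ}

theorem betaKernel_nonneg (hx : x ∈ Icc 0 1) : 0 ≤ betaKernel a b x :=
  mul_nonneg (rpow_nonneg hx.1 a) (rpow_nonneg (sub_nonneg.2 hx.2) b)

theorem rpow_mul_betaKernel (hx : 0 < x) (c : ℝ) :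
    x ^ c * betaKernel a b x = betaKernel (a + c) b x := by
  rw [betaKernel, betaKernel, rpow_add hx]
  ring

theorem one_sub_rpow_mul_betaKernel (hx : x < 1) (c : ℝ) :
    (1 - x) ^ c * betaKernel a b x = betaKernel a (b + c) x := by
  rw [betaKernel, betaKernel, rpow_add (sub_pos.2 hx)]
  ring

theorem hasDerivAt_one_sub_rpow (hx : x < 1) (c : ℝ) :
    HasDerivAt (fun x : ℝ ↦ (1 - x) ^ c) (-(c * (1 - x) ^ (c - 1))) x := by
  simpa using ((hasDerivAt_id x).const_sub 1).rpow_const (p := c) (Or.inl (sub_pos.2 hx).ne')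

theorem hasDerivAt_betaKernel (hx : x ∈ Ioo 0 1) :
    HasDerivAt (betaKernel a b) (a * betaKernel (a - 1) b x - b * betaKernel a (b - 1) x) x := by
  convert! (hasDerivAt_rpow_const (p := a) (Or.inl hx.1.ne')).mul
    (hasDerivAt_one_sub_rpow hx.2 b) using 1
  simp only [betaKernel]
  ring

theorem continuousAt_betaKernel_zero (ha : 0 < a) : ContinuousAt (betaKernel a b) 0 :=
  (continuousAt_rpow_const 0 a (Or.inr ha.le)).mul
    ((continuousAt_const.sub continuousAt_id).rpow_const (Or.inl (by simp)))

theorem continuousAt_betaKernel_one (hb : 0 < b) : ContinuousAt (betaKernel a b) 1 :=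
  (continuousAt_rpow_const 1 a (Or.inl one_ne_zero)).mul
    ((continuousAt_const.sub continuousAt_id).rpow_const (Or.inr hb.le))

theorem tendsto_betaKernel_zero (ha : 0 < a) :
    Tendsto (betaKernel a b) (𝓝[>] 0) (𝓝 0) := by
  have := (continuousAt_betaKernel_zero (b := b) ha).tendsto
  rw [betaKernel, zero_rpow ha.ne', zero_mul] at this
  exact this.mono_left nhdsWithin_le_nhds

theorem tendsto_betaKernel_one (hb : 0 < b) :
    Tendsto (betaKernel a b) (𝓝[<] 1) (𝓝 0) := by
  have := (continuousAt_betaKernel_one (a := a) hb).tendsto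
  rw [betaKernel, sub_self, zero_rpow hb.ne', mul_zero] at this
  exact this.mono_left nhdsWithin_le_nhds

@[fun_prop]
theorem measurable_betaKernel : Measurable (betaKernel a b) := by
  unfold betaKernel
  fun_prop

theorem lintegral_betaKernel (ha : -1 < a) (hb : -1 < b) :
    ∫⁻ x in Ioo 0 1, ENNReal.ofReal (betaKernel a b x) =
      ENNReal.ofReal (ProbabilityTheory.beta (a + 1) (b + 1)) := by
  have ha' : 0 < a + 1 := by linarith
  have hb' : 0 < b + 1 := by linarith
  have beta_pos := ProbabilityTheory.beta_pos ha' hb'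
  have normalised := ProbabilityTheory.lintegral_betaPDF_eq_one ha' hb'
  simp only [ProbabilityTheory.lintegral_betaPDF, add_sub_cancel_right, mul_assoc,
    ENNReal.ofReal_mul (one_div_pos.2 beta_pos).le] at normalised
  rw [lintegral_const_mul _ (by fun_prop), one_div,
    ENNReal.ofReal_inv_of_pos beta_pos] at normalised
  simpa [betaKernel] using ENNReal.eq_inv_of_mul_eq_one_left ((mul_comm _ _).trans normalised)

theorem ae_restrict_Ioo_betaKernel_nonneg :
    0 ≤ᵐ[volume.restrict (Ioo 0 1)] betaKernel a b :=
  ae_restrict_of_forall_mem measurableSet_Ioo fun _ hx ↦ betaKernel_nonneg (Ioo_subset_Icc_self hx)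

theorem integrableOn_betaKernel (ha : -1 < a) (hb : -1 < b) :
    IntegrableOn (betaKernel a b) (Ioo 0 1) := by
  rw [IntegrableOn, ← lintegral_ofReal_ne_top_iff_integrable
    measurable_betaKernel.aestronglyMeasurable ae_restrict_Ioo_betaKernel_nonneg,
    lintegral_betaKernel ha hb]
  exact ENNReal.ofReal_ne_top

theorem integral_betaKernel (ha : -1 < a) (hb : -1 < b) :
    ∫ x in Ioo 0 1, betaKernel a b x = ProbabilityTheory.beta (a + 1) (b + 1) := by
  rw [integral_eq_lintegral_of_nonneg_ae ae_restrict_Ioo_betaKernel_nonneg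
    measurable_betaKernel.aestronglyMeasurable, lintegral_betaKernel ha hb]
  exact ENNReal.toReal_ofReal
    (ProbabilityTheory.beta_pos (by linarith) (by linarith)).le

theorem abs_one_sub_one_sub_rpow_mul_betaKernel_le (hx : x ∈ Ioo 0 1) :
    |(1 - (1 - x) ^ s) * betaKernel a b x| ≤
      max 1 |s| * (betaKernel (a + 1) b x + betaKernel (a + 1) (b + s) x) := by
  have kernel_nonneg : 0 ≤ betaKernel a b x := betaKernel_nonneg (Ioo_subset_Icc_self hx)
  have bernoulli : |1 - (1 - x) ^ s| ≤ max 1 |s| * x * (1 + (1 - x) ^ s) := by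
    simpa only [sub_sub_cancel] using
      abs_one_sub_rpow_le (sub_pos.2 hx.2) (sub_le_self 1 hx.1.le) s
  calc |(1 - (1 - x) ^ s) * betaKernel a b x|
      = |1 - (1 - x) ^ s| * betaKernel a b x := by rw [abs_mul, abs_of_nonneg kernel_nonneg]
    _ ≤ max 1 |s| * x * (1 + (1 - x) ^ s) * betaKernel a b x :=
        mul_le_mul_of_nonneg_right bernoulli kernel_nonneg
    _ = max 1 |s| * (betaKernel (a + 1) b x + betaKernel (a + 1) (b + s) x) := by
        rw [← one_sub_rpow_mul_betaKernel hx.2 s, ← rpow_mul_betaKernel hx.1 1, rpow_one]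
        ring

theorem integrableOn_one_sub_one_sub_rpow_mul_betaKernel (ha : -2 < a) (hb : -1 < b)
    (hbs : -1 < b + s) :
    IntegrableOn (fun x ↦ (1 - (1 - x) ^ s) * betaKernel a b x) (Ioo 0 1) := by
  have ha' : -1 < a + 1 := by linarith
  refine (((integrableOn_betaKernel ha' hb).add
    (integrableOn_betaKernel ha' hbs)).const_mul (max 1 |s|)).mono' ?_ ?_
  · exact Measurable.aestronglyMeasurable (by fun_prop)
  · exact ae_restrict_of_forall_mem measurableSet_Ioo fun x hx ↦
      abs_one_sub_one_sub_rpow_mul_betaKernel_le hx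

theorem tendsto_one_sub_one_sub_rpow_mul_betaKernel_zero (ha : -1 < a) :
    Tendsto (fun x ↦ (1 - (1 - x) ^ s) * betaKernel a b x) (𝓝[>] 0) (𝓝 0) := by
  have ha' : 0 < a + 1 := by linarith
  have bound_tendsto : Tendsto
      (fun x ↦ max 1 |s| * (betaKernel (a + 1) b x + betaKernel (a + 1) (b + s) x))
      (𝓝[>] 0) (𝓝 0) := by
    simpa using ((tendsto_betaKernel_zero (b := b) ha').add
      (tendsto_betaKernel_zero (b := b + s) ha')).const_mul (max 1 |s|)
  refine squeeze_zero_norm' ?_ bound_tendsto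
  filter_upwards [Ioo_mem_nhdsGT zero_lt_one] with x hx
  exact abs_one_sub_one_sub_rpow_mul_betaKernel_le hx

theorem tendsto_one_sub_one_sub_rpow_mul_betaKernel_one (hb : 0 < b) (hbs : 0 < b + s) :
    Tendsto (fun x ↦ (1 - (1 - x) ^ s) * betaKernel a b x) (𝓝[<] 1) (𝓝 0) := by
  have difference_tendsto : Tendsto (fun x ↦ betaKernel a b x - betaKernel a (b + s) x)
      (𝓝[<] 1) (𝓝 0) := by
    simpa using (tendsto_betaKernel_one hb).sub (tendsto_betaKernel_one hbs)
  refine difference_tendsto.congr' ?_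
  filter_upwards [self_mem_nhdsWithin] with x hx
  rw [sub_mul, one_mul, one_sub_rpow_mul_betaKernel hx]

end BetaKernel

/-- The density of the Lévy measure `ν̃` on `(0, 1)`; outside `(0, 1)` its values are irrelevant. -/
noncomputable def twoParameterDensity (α θ x : ℝ) : ℝ :=
  α * x ^ (-α - 1) * (1 - x) ^ θ + θ * x ^ (-α) * (1 - x) ^ (θ - 1)

section TwoParameterDensity

variable {α θ s x : ℝ}

theorem twoParameterDensity_eq_betaKernel :
    twoParameterDensity α θ x =
      α * betaKernel (-α - 1) θ x + θ * betaKernel (-α) (θ - 1) x := by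
  simp only [twoParameterDensity, betaKernel, mul_assoc]

theorem hasDerivAt_neg_betaKernel (hx : x ∈ Ioo 0 1) :
    HasDerivAt (fun x ↦ -betaKernel (-α) θ x) (twoParameterDensity α θ x) x := by
  refine (hasDerivAt_betaKernel hx).fun_neg.congr_deriv ?_
  rw [twoParameterDensity_eq_betaKernel]
  ring

theorem integrableOn_one_sub_one_sub_rpow_mul_twoParameterDensity (hα : α < 1) (hθ : 0 < θ)
    (hs : -θ < s) :
    IntegrableOn (fun x ↦ (1 - (1 - x) ^ s) * twoParameterDensity α θ x) (Ioo 0 1) := by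
  have left : IntegrableOn (fun x ↦ (1 - (1 - x) ^ s) * betaKernel (-α - 1) θ x) (Ioo 0 1) :=
    integrableOn_one_sub_one_sub_rpow_mul_betaKernel (by linarith) (by linarith) (by linarith)
  have right : IntegrableOn (fun x ↦ (1 - (1 - x) ^ s) * betaKernel (-α) (θ - 1) x) (Ioo 0 1) :=
    integrableOn_one_sub_one_sub_rpow_mul_betaKernel (by linarith) (by linarith) (by linarith)
  refine IntegrableOn.congr_fun ((left.const_mul α).add (right.const_mul θ)) (fun x _ ↦ ?_)
    measurableSet_Ioo
  simp only [Pi.add_apply, twoParameterDensity_eq_betaKernel]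
  ring

theorem integral_one_sub_one_sub_rpow_mul_twoParameterDensity (hα : α < 1) (hθ : 0 < θ)
    (hs : -θ < s) :
    ∫ x in Ioo 0 1, (1 - (1 - x) ^ s) * twoParameterDensity α θ x =
      s * ProbabilityTheory.beta (1 - α) (s + θ) := by
  have hα' : -1 < -α := by linarith
  have hsθ : -1 < θ + (s - 1) := by linarith
  have deriv_mul_tail : EqOn (fun x ↦ -s * betaKernel (-α) (θ + (s - 1)) x)
      (fun x ↦ s * (1 - x) ^ (s - 1) * -betaKernel (-α) θ x) (Ioo 0 1) := by
    intro x hx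
    simp only [← one_sub_rpow_mul_betaKernel hx.2 (s - 1)]
    ring
  have deriv_mul_tail_integrable :
      IntegrableOn (fun x ↦ s * (1 - x) ^ (s - 1) * -betaKernel (-α) θ x) (Ioo 0 1) :=
    IntegrableOn.congr_fun ((integrableOn_betaKernel hα' hsθ).const_mul (-s)) deriv_mul_tail
      measurableSet_Ioo
  have by_parts := integral_Ioo_mul_deriv_eq_deriv_mul zero_lt_one
    (fun x hx ↦ by simpa using (hasDerivAt_one_sub_rpow hx.2 s).const_sub 1)
    (fun _ ↦ hasDerivAt_neg_betaKernel)
    (integrableOn_one_sub_one_sub_rpow_mul_twoParameterDensity hα hθ hs) deriv_mul_tail_integrable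
    (by simpa using (tendsto_one_sub_one_sub_rpow_mul_betaKernel_zero hα').neg)
    (by simpa using (tendsto_one_sub_one_sub_rpow_mul_betaKernel_one hθ (by linarith)).neg)
  calc ∫ x in Ioo 0 1, (1 - (1 - x) ^ s) * twoParameterDensity α θ x
      = -∫ x in Ioo 0 1, s * (1 - x) ^ (s - 1) * -betaKernel (-α) θ x := by
        simpa only [sub_zero, zero_sub] using by_parts
    _ = s * ∫ x in Ioo 0 1, betaKernel (-α) (θ + (s - 1)) x := by
        rw [← setIntegral_congr_fun measurableSet_Ioo deriv_mul_tail, integral_const_mul, neg_mul,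
          neg_neg]
    _ = s * ProbabilityTheory.beta (1 - α) (s + θ) := by
        rw [integral_betaKernel hα' hsθ]
        ring_nf

end TwoParameterDensity

theorem laplace_exponent_two_parameter_general {α θ s : ℝ} {f : ℝ → ℝ} (hα : α < 1) (hθ : 0 < θ)
    (hs : -θ < s) (hf : EqOn f (twoParameterDensity α θ) (Ioo 0 1)) :
    IntegrableOn (fun x ↦ (1 - (1 - x) ^ s) * f x) (Ioo 0 1) ∧
      ∫ x in Ioo 0 1, (1 - (1 - x) ^ s) * f x =
        s * Gamma (1 - α) * Gamma (s + θ) / Gamma (s + 1 - α + θ) := by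
  have integrand_eq : EqOn (fun x ↦ (1 - (1 - x) ^ s) * twoParameterDensity α θ x)
      (fun x ↦ (1 - (1 - x) ^ s) * f x) (Ioo 0 1) := fun x hx ↦ by simp only [hf hx]
  refine ⟨(integrableOn_one_sub_one_sub_rpow_mul_twoParameterDensity hα hθ hs).congr_fun
    integrand_eq measurableSet_Ioo, ?_⟩
  rw [← setIntegral_congr_fun measurableSet_Ioo integrand_eq,
    integral_one_sub_one_sub_rpow_mul_twoParameterDensity hα hθ hs, ProbabilityTheory.beta,
    show 1 - α + (s + θ) = s + 1 - α + θ by ring]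
  ring

/-- For `0 < α < 1`, `θ > 0` and the density
`f(x) = α x^{-α-1} (1-x)^θ + θ x^{-α} (1-x)^{θ-1}` on `(0,1)`
(so that `ν̃([x,1)) = x^{-α}(1-x)^θ`), one has for every `s > 0`
`∫₀¹ (1 - (1-x)^s) f(x) dx = s Γ(1-α) Γ(s+θ) / Γ(s+1-α+θ)`. -/
theorem laplace_exponent_two_parameter (α θ : ℝ) (hα0 : 0 < α) (hα1 : α < 1) (hθ : 0 < θ)
    (f : ℝ → ℝ)
    (hf : ∀ x ∈ Set.Ioo (0 : ℝ) 1,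
      f x = α * x ^ (-α - 1) * (1 - x) ^ θ + θ * x ^ (-α) * (1 - x) ^ (θ - 1)) :
    ∀ s : ℝ, 0 < s →
      ∫ x in Set.Ioo (0 : ℝ) 1, (1 - (1 - x) ^ s) * f x =
        s * Real.Gamma (1 - α) * Real.Gamma (s + θ) / Real.Gamma (s + 1 - α + θ) := by
  exact fun s hs ↦ (laplace_exponent_two_parameter_general hα1 hθ (by linarith) hf).2
end
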